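/- arXiv:1907.02219 — 5 statements merged into one kernel-verified Lean document; each statement's English description precedes it below -/
import Mathlib

section
/- The set Ω_f is dense in the nonnegative orthant of ℝ^{N_G}: every vector f ∈ ℝ^{N_G} with f ≥ 0 componentwise lies in the closure of Ω_f. -/
open Matrix

noncomputable section

/-- Parameter tuple ξ = (s̄, s̲, p̄, p̲). -/
abbrev XiT (NG E : ℕ) : Type := (Fin NG → ℝ) × (Fin NG → ℝ) × (Fin E → ℝ) × (Fin E → ℝ)

/-- Each column of `C` has exactly one `+1`, one `-1`, and zeros elsewhere. -/
def IsIncidence {NG NL E : ℕ} (C : Matrix (Fin (NG + NL)) (Fin E) ℝ) : Prop :=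
  ∀ e : Fin E, ∃ u v : Fin (NG + NL), u ≠ v ∧ C u e = 1 ∧ C v e = -1 ∧
    ∀ w : Fin (NG + NL), w ≠ u → w ≠ v → C w e = 0

/-- Connectedness: the kernel of `Cᵀ` consists exactly of the constant vectors. -/
def ConnectedIncidence {NG NL E : ℕ} (C : Matrix (Fin (NG + NL)) (Fin E) ℝ) : Prop :=
  ∀ x : Fin (NG + NL) → ℝ, Cᵀ *ᵥ x = 0 ↔ ∃ c : ℝ, x = fun _ => c

/-- `B` is diagonal with strictly positive diagonal entries. -/
def PosDiag {E : ℕ} (B : Matrix (Fin E) (Fin E) ℝ) : Prop :=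
  (∀ e, 0 < B e e) ∧ ∀ e e' : Fin E, e ≠ e' → B e e' = 0

/-- Feasibility of `(s^g, θ)` for the DC-OPF with limits `ξ` and loads `sl`. -/
def Feasible {NG NL E : ℕ} (C : Matrix (Fin (NG + NL)) (Fin E) ℝ)
    (B : Matrix (Fin E) (Fin E) ℝ) (ξ : XiT NG E) (sl : Fin NL → ℝ)
    (sg : Fin NG → ℝ) (θ : Fin (NG + NL) → ℝ) : Prop :=
  (∀ h : 0 < NG + NL, θ ⟨0, h⟩ = 0) ∧
  (C * B * Cᵀ) *ᵥ θ = Fin.append sg (fun j => -(sl j)) ∧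
  (∀ i, ξ.2.1 i ≤ sg i ∧ sg i ≤ ξ.1 i) ∧
  (∀ e, ξ.2.2.2 e ≤ ((B * Cᵀ) *ᵥ θ) e ∧ ((B * Cᵀ) *ᵥ θ) e ≤ ξ.2.2.1 e)

/-- The set Ω_ξ of admissible system limits. -/
def OmegaXi {NG NL E : ℕ} (C : Matrix (Fin (NG + NL)) (Fin E) ℝ)
    (B : Matrix (Fin E) (Fin E) ℝ) : Set (XiT NG E) :=
  { ξ | (∀ i, 0 ≤ ξ.2.1 i) ∧ (∀ i, ξ.2.1 i < ξ.1 i) ∧ (∀ e, ξ.2.2.2 e < ξ.2.2.1 e) ∧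
    ∃ sl : Fin NL → ℝ, (∀ j, 0 < sl j) ∧ ∃ sg θ, Feasible C B ξ sl sg θ }

/-- The set Ω_sl(ξ) of strictly positive feasible load profiles. -/
def OmegaSl {NG NL E : ℕ} (C : Matrix (Fin (NG + NL)) (Fin E) ℝ)
    (B : Matrix (Fin E) (Fin E) ℝ) (ξ : XiT NG E) : Set (Fin NL → ℝ) :=
  { sl | (∀ j, 0 < sl j) ∧ ∃ sg θ, Feasible C B ξ sl sg θ }

/-- `(sg, θ)` is an optimal solution of the DC-OPF. -/
def IsOptimal {NG NL E : ℕ} (C : Matrix (Fin (NG + NL)) (Fin E) ℝ)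
    (B : Matrix (Fin E) (Fin E) ℝ) (f : Fin NG → ℝ) (ξ : XiT NG E)
    (sl : Fin NL → ℝ) (sg : Fin NG → ℝ) (θ : Fin (NG + NL) → ℝ) : Prop :=
  Feasible C B ξ sl sg θ ∧
  ∀ sg' θ', Feasible C B ξ sl sg' θ' → f ⬝ᵥ sg ≤ f ⬝ᵥ sg'

/-- The matrix M: first N rows are C B Cᵀ, last row is e₁ᵀ. -/
def Mmat {NG NL E : ℕ} (C : Matrix (Fin (NG + NL)) (Fin E) ℝ)
    (B : Matrix (Fin E) (Fin E) ℝ) : Matrix (Fin (NG + NL + 1)) (Fin (NG + NL)) ℝ :=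
  Matrix.of fun i j => if h : (i : ℕ) < NG + NL then (C * B * Cᵀ) ⟨(i : ℕ), h⟩ j
    else if (j : ℕ) = 0 then 1 else 0

/-- KKT point for the DC-OPF. -/
def IsKKT {NG NL E : ℕ} (C : Matrix (Fin (NG + NL)) (Fin E) ℝ)
    (B : Matrix (Fin E) (Fin E) ℝ) (f : Fin NG → ℝ) (ξ : XiT NG E)
    (sl : Fin NL → ℝ) (sg : Fin NG → ℝ) (θ : Fin (NG + NL) → ℝ)
    (τ : Fin (NG + NL + 1) → ℝ) (μp μm : Fin E → ℝ) (lp lm : Fin NG → ℝ) : Prop :=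
  Feasible C B ξ sl sg θ ∧
  (Mmat C B)ᵀ *ᵥ τ + (C * B) *ᵥ (μp - μm) = 0 ∧
  (∀ i : Fin NG, -f i = -τ (Fin.castLE (by omega) i) + lp i - lm i) ∧
  (∀ e, 0 ≤ μp e) ∧ (∀ e, 0 ≤ μm e) ∧ (∀ i, 0 ≤ lp i) ∧ (∀ i, 0 ≤ lm i) ∧
  μp ⬝ᵥ (((B * Cᵀ) *ᵥ θ) - ξ.2.2.1) = 0 ∧
  μm ⬝ᵥ (ξ.2.2.2 - ((B * Cᵀ) *ᵥ θ)) = 0 ∧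
  lp ⬝ᵥ (sg - ξ.1) = 0 ∧
  lm ⬝ᵥ (ξ.2.1 - sg) = 0

/-- ℓ₀ "norm": number of nonzero entries. -/
def nnz {n : ℕ} (v : Fin n → ℝ) : ℕ := Set.ncard { i | v i ≠ 0 }

/-- The set Ω_f of well-behaved cost vectors. -/
def OmegaF {NG NL E : ℕ} (C : Matrix (Fin (NG + NL)) (Fin E) ℝ)
    (B : Matrix (Fin E) (Fin E) ℝ) : Set (Fin NG → ℝ) :=
  { f | (∀ i, 0 ≤ f i) ∧
    ∀ ξ ∈ OmegaXi C B, ∀ sl ∈ OmegaSl C B ξ,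
      (∃! p : (Fin NG → ℝ) × (Fin (NG + NL) → ℝ), IsOptimal C B f ξ sl p.1 p.2) ∧
      ∀ sg θ τ μp μm lp lm, IsKKT C B f ξ sl sg θ τ μp μm lp lm →
        NG - 1 ≤ nnz μp + nnz μm + nnz lp + nnz lm }

/-- Number of binding inequality constraints at `(sg, θ)` (among the 2N_G + 2E). -/
def bindingCount {NG NL E : ℕ} (C : Matrix (Fin (NG + NL)) (Fin E) ℝ)
    (B : Matrix (Fin E) (Fin E) ℝ) (ξ : XiT NG E) (sg : Fin NG → ℝ)
    (θ : Fin (NG + NL) → ℝ) : ℕ :=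
  Set.ncard { i : Fin NG | sg i = ξ.1 i } + Set.ncard { i : Fin NG | sg i = ξ.2.1 i } +
  Set.ncard { e : Fin E | ((B * Cᵀ) *ᵥ θ) e = ξ.2.2.1 e } +
  Set.ncard { e : Fin E | ((B * Cᵀ) *ᵥ θ) e = ξ.2.2.2 e }

/-- ~Ω_sl(ξ, f): loads with exactly N_G − 1 binding constraints at the optimum. -/
def TOmegaSl {NG NL E : ℕ} (C : Matrix (Fin (NG + NL)) (Fin E) ℝ)
    (B : Matrix (Fin E) (Fin E) ℝ) (f : Fin NG → ℝ) (ξ : XiT NG E) :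
    Set (Fin NL → ℝ) :=
  { sl | sl ∈ OmegaSl C B ξ ∧
    ∀ sg θ, IsOptimal C B f ξ sl sg θ → bindingCount C B ξ sg θ = NG - 1 }

/-- Indices of binding inequality constraints:
`inl i` = upper generation, `inr (inl i)` = lower generation,
`inr (inr (inl e))` = upper flow, `inr (inr (inr e))` = lower flow. -/
def BindingIdx {NG NL E : ℕ} (C : Matrix (Fin (NG + NL)) (Fin E) ℝ)
    (B : Matrix (Fin E) (Fin E) ℝ) (ξ : XiT NG E) (sg : Fin NG → ℝ)
    (θ : Fin (NG + NL) → ℝ) : Set (Fin NG ⊕ Fin NG ⊕ Fin E ⊕ Fin E) :=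
  { c | match c with
    | Sum.inl i => sg i = ξ.1 i
    | Sum.inr (Sum.inl i) => sg i = ξ.2.1 i
    | Sum.inr (Sum.inr (Sum.inl e)) => ((B * Cᵀ) *ᵥ θ) e = ξ.2.2.1 e
    | Sum.inr (Sum.inr (Sum.inr e)) => ((B * Cᵀ) *ᵥ θ) e = ξ.2.2.2 e }

/-- Gradients of the N + 1 equality constraints, as vectors in ℝ^{N_G} × ℝ^{N}. -/
def eqGrad {NG NL E : ℕ} (C : Matrix (Fin (NG + NL)) (Fin E) ℝ)
    (B : Matrix (Fin E) (Fin E) ℝ) :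
    (Unit ⊕ Fin (NG + NL)) → (Fin NG → ℝ) × (Fin (NG + NL) → ℝ)
  | Sum.inl _ => (0, fun j => if (j : ℕ) = 0 then 1 else 0)
  | Sum.inr i => ((fun k : Fin NG => if (k : ℕ) = (i : ℕ) then -1 else 0),
      fun j => (C * B * Cᵀ) i j)

/-- Gradients of the inequality constraints. -/
def ineqGrad {NG NL E : ℕ} (C : Matrix (Fin (NG + NL)) (Fin E) ℝ)
    (B : Matrix (Fin E) (Fin E) ℝ) :
    (Fin NG ⊕ Fin NG ⊕ Fin E ⊕ Fin E) → (Fin NG → ℝ) × (Fin (NG + NL) → ℝ)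
  | Sum.inl i => (Pi.single i 1, 0)
  | Sum.inr (Sum.inl i) => (-Pi.single i 1, 0)
  | Sum.inr (Sum.inr (Sum.inl e)) => (0, fun j => (B * Cᵀ) e j)
  | Sum.inr (Sum.inr (Sum.inr e)) => (0, fun j => -(B * Cᵀ) e j)

/-- The family of gradients of all equality constraints together with the binding
inequality constraints at `(sg, θ)`. -/
def fullGrad {NG NL E : ℕ} (C : Matrix (Fin (NG + NL)) (Fin E) ℝ)
    (B : Matrix (Fin E) (Fin E) ℝ) (ξ : XiT NG E) (sg : Fin NG → ℝ)
    (θ : Fin (NG + NL) → ℝ) :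
    ((Unit ⊕ Fin (NG + NL)) ⊕ ↥(BindingIdx C B ξ sg θ)) →
      (Fin NG → ℝ) × (Fin (NG + NL) → ℝ) :=
  fun i => match i with
    | Sum.inl j => eqGrad C B j
    | Sum.inr c => ineqGrad C B c.1

/-- S_G ⊥ S_B : the equality-constraint gradients together with the gradients
`(e_i, 0)`, `i ∈ S_G`, and `(0, row e of B Cᵀ)`, `e ∈ S_B`, are linearly independent. -/
def Perp {NG NL E : ℕ} (C : Matrix (Fin (NG + NL)) (Fin E) ℝ)
    (B : Matrix (Fin E) (Fin E) ℝ) (SG : Finset (Fin NG)) (SB : Finset (Fin E)) : Prop :=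
  LinearIndependent ℝ (fun i : (Unit ⊕ Fin (NG + NL)) ⊕ (↥SG ⊕ ↥SB) =>
    match i with
    | Sum.inl j => eqGrad C B j
    | Sum.inr (Sum.inl g) => ((Pi.single (g : Fin NG) 1 : Fin NG → ℝ), (0 : Fin (NG + NL) → ℝ))
    | Sum.inr (Sum.inr e) => ((0 : Fin NG → ℝ), fun j => (B * Cᵀ) (e : Fin E) j))

/-- The OPF operator: the generation part of the (unique) optimal solution. -/
def OPFmap {NG NL E : ℕ} (C : Matrix (Fin (NG + NL)) (Fin E) ℝ)
    (B : Matrix (Fin E) (Fin E) ℝ) (f : Fin NG → ℝ) (ξ : XiT NG E)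
    (sl : Fin NL → ℝ) : Fin NG → ℝ := by
  classical
  exact if h : ∃ p : (Fin NG → ℝ) × (Fin (NG + NL) → ℝ), IsOptimal C B f ξ sl p.1 p.2
    then h.choose.1 else 0

/-- The matrix R(S_G, S_B)ᵀ: rows N_G+1,…,N of C B Cᵀ; the rows of C B Cᵀ indexed
by S_G; the rows of B Cᵀ indexed by S_B; and e₁ᵀ. -/
def Rmat {NG NL E : ℕ} (C : Matrix (Fin (NG + NL)) (Fin E) ℝ)
    (B : Matrix (Fin E) (Fin E) ℝ) (SG : Finset (Fin NG)) (SB : Finset (Fin E)) :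
    Matrix ((Fin NL ⊕ (↥SG ⊕ ↥SB)) ⊕ Unit) (Fin (NG + NL)) ℝ :=
  Matrix.of fun i j => match i with
    | Sum.inl (Sum.inl k) => (C * B * Cᵀ) (Fin.natAdd NG k) j
    | Sum.inl (Sum.inr (Sum.inl g)) => (C * B * Cᵀ) (Fin.castAdd NL (g : Fin NG)) j
    | Sum.inl (Sum.inr (Sum.inr e)) => (B * Cᵀ) (e : Fin E) j
    | Sum.inr _ => if (j : ℕ) = 0 then 1 else 0

/-- The matrix Π applied to a load vector: embeds ℝ^{N_L} in the row-index space. -/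
def padSl {NG NL E : ℕ} (SG : Finset (Fin NG)) (SB : Finset (Fin E))
    (v : Fin NL → ℝ) : (Fin NL ⊕ (↥SG ⊕ ↥SB)) ⊕ Unit → ℝ
  | Sum.inl (Sum.inl k) => v k
  | _ => 0

/-- J(S_G, S_B) as a map: v ↦ −G (R(S_G,S_B)ᵀ)⁻¹ Π v, where G consists of the
first N_G rows of C B Cᵀ. -/
def JFun {NG NL E : ℕ} (C : Matrix (Fin (NG + NL)) (Fin E) ℝ)
    (B : Matrix (Fin E) (Fin E) ℝ) (SG : Finset (Fin NG)) (SB : Finset (Fin E))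
    (v : Fin NL → ℝ) : Fin NG → ℝ :=
  fun i =>
    -(((C * B * Cᵀ) *ᵥ (Function.invFun (Rmat C B SG SB).mulVec (padSl SG SB v)))
      (Fin.castAdd NL i))

/-- J(S_G, S_B) as an N_G × N_L matrix. -/
def Jmatrix {NG NL E : ℕ} (C : Matrix (Fin (NG + NL)) (Fin E) ℝ)
    (B : Matrix (Fin E) (Fin E) ℝ) (SG : Finset (Fin NG)) (SB : Finset (Fin E)) :
    Matrix (Fin NG) (Fin NL) ℝ :=
  Matrix.of fun i j => JFun C B SG SB (Pi.single j 1) i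

/-- Directions `θ` preserving all equalities and the constraints in `SG`, `SB`. -/
def DirK {NG NL E : ℕ} (C : Matrix (Fin (NG + NL)) (Fin E) ℝ)
    (B : Matrix (Fin E) (Fin E) ℝ) (SG : Finset (Fin NG)) (SB : Finset (Fin E))
    (θ : Fin (NG + NL) → ℝ) : Prop :=
  (∀ h : 0 < NG + NL, θ ⟨0, h⟩ = 0) ∧
  (∀ j : Fin NL, ((C * B * Cᵀ) *ᵥ θ) (Fin.natAdd NG j) = 0) ∧
  (∀ i ∈ SG, ((C * B * Cᵀ) *ᵥ θ) (Fin.castAdd NL i) = 0) ∧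
  (∀ e ∈ SB, ((B * Cᵀ) *ᵥ θ) e = 0)

/-- generation part -/
def genP {NG NL E : ℕ} (C : Matrix (Fin (NG + NL)) (Fin E) ℝ)
    (B : Matrix (Fin E) (Fin E) ℝ) (θ : Fin (NG + NL) → ℝ) : Fin NG → ℝ :=
  fun i => ((C * B * Cᵀ) *ᵥ θ) (Fin.castAdd NL i)

theorem posDiag_mulVec {E : ℕ} {B : Matrix (Fin E) (Fin E) ℝ} (hB : PosDiag B)
    (x : Fin E → ℝ) (e : Fin E) : (B *ᵥ x) e = B e e * x e := by
  simp only [Matrix.mulVec, dotProduct]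
  rw [Finset.sum_eq_single e]
  · intro b _ hb
    rw [hB.2 e b (Ne.symm hb), zero_mul]
  · simp

theorem flow_zero {NG NL E : ℕ} {C : Matrix (Fin (NG + NL)) (Fin E) ℝ}
    {B : Matrix (Fin E) (Fin E) ℝ} (hConn : ConnectedIncidence C) (hB : PosDiag B)
    {θ : Fin (NG + NL) → ℝ} (hN : 0 < NG + NL) (h0 : θ ⟨0, hN⟩ = 0)
    (h : (B * Cᵀ) *ᵥ θ = 0) : θ = 0 := by
  have h1 : Cᵀ *ᵥ θ = 0 := by
    funext e
    have := congrFun h e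
    rw [← Matrix.mulVec_mulVec, posDiag_mulVec hB] at this
    exact (mul_eq_zero.mp this).resolve_left (hB.1 e).ne'
  obtain ⟨c, rfl⟩ := (hConn θ).1 h1
  funext i
  exact h0

theorem lap_zero {NG NL E : ℕ} {C : Matrix (Fin (NG + NL)) (Fin E) ℝ}
    {B : Matrix (Fin E) (Fin E) ℝ} (hConn : ConnectedIncidence C) (hB : PosDiag B)
    {θ : Fin (NG + NL) → ℝ} (hN : 0 < NG + NL) (h0 : θ ⟨0, hN⟩ = 0)
    (h : (C * B * Cᵀ) *ᵥ θ = 0) : θ = 0 := by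
  have h1 : θ ⬝ᵥ ((C * B * Cᵀ) *ᵥ θ) = ∑ e, B e e * ((Cᵀ *ᵥ θ) e) ^ 2 := by
    rw [Matrix.mul_assoc, ← Matrix.mulVec_mulVec, ← Matrix.mulVec_mulVec,
      Matrix.dotProduct_mulVec, ← Matrix.mulVec_transpose]
    simp only [dotProduct, posDiag_mulVec hB]
    refine Finset.sum_congr rfl fun e _ => by ring
  rw [h, dotProduct_zero] at h1
  have h2 := (Finset.sum_eq_zero_iff_of_nonneg
    (fun e _ => mul_nonneg (hB.1 e).le (sq_nonneg _))).1 h1.symm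
  apply flow_zero hConn hB hN h0
  funext e
  rw [← Matrix.mulVec_mulVec, posDiag_mulVec hB]
  have h3 := h2 e (Finset.mem_univ _)
  have h4 := (mul_eq_zero.mp h3).resolve_left (hB.1 e).ne'
  rw [pow_eq_zero_iff two_ne_zero] at h4
  simp [h4]

theorem genP_ne_zero {NG NL E : ℕ} {C : Matrix (Fin (NG + NL)) (Fin E) ℝ}
    {B : Matrix (Fin E) (Fin E) ℝ} (hConn : ConnectedIncidence C) (hB : PosDiag B)
    {SG : Finset (Fin NG)} {SB : Finset (Fin E)}
    {θ : Fin (NG + NL) → ℝ} (hN : 0 < NG + NL) (hK : DirK C B SG SB θ) (hne : θ ≠ 0) :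
    genP C B θ ≠ 0 := by
  intro h
  apply hne
  apply lap_zero hConn hB hN (hK.1 hN)
  funext i
  refine Fin.addCases (fun i => ?_) (fun j => ?_) i
  · exact congrFun h i
  · exact hK.2.1 j

/-- density core -/
theorem dense_core {n : ℕ} {ι : Type*} [Finite ι] (s : ι → Fin n → ℝ) (hs : ∀ k, s k ≠ 0)
    (f : Fin n → ℝ) (hf : ∀ i, 0 ≤ f i) :
    f ∈ closure {g : Fin n → ℝ | (∀ i, 0 ≤ g i) ∧ ∀ k, g ⬝ᵥ s k ≠ 0} := by
  let γ : ℝ → Fin n → ℝ := fun t i => f i + t ^ ((i : ℕ) + 1)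
  have hcont : Continuous γ := by fun_prop
  have ht : Filter.Tendsto γ (nhdsWithin 0 (Set.Ioi 0)) (nhds f) := by
    have h0 : γ 0 = f := by funext i; simp [γ]
    have := hcont.tendsto 0
    rw [h0] at this
    exact this.mono_left nhdsWithin_le_nhds
  apply mem_closure_of_tendsto ht
  have hpos : ∀ᶠ t : ℝ in nhdsWithin 0 (Set.Ioi 0), 0 < t := eventually_mem_nhdsWithin
  have hne : ∀ᶠ t : ℝ in nhdsWithin 0 (Set.Ioi 0), ∀ k, γ t ⬝ᵥ s k ≠ 0 := by
    rw [Filter.eventually_all]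
    intro k
    let p : Polynomial ℝ := Polynomial.C (f ⬝ᵥ s k) +
      ∑ i : Fin n, Polynomial.C (s k i) * Polynomial.X ^ ((i : ℕ) + 1)
    have hp : p ≠ 0 := by
      intro hp
      apply hs k
      funext i
      have := congrArg (fun q => Polynomial.coeff q ((i : ℕ) + 1)) hp
      simp only [p, Polynomial.coeff_add, Polynomial.coeff_C_succ, Polynomial.finsetSum_coeff,
        Polynomial.coeff_C_mul, Polynomial.coeff_X_pow, Polynomial.coeff_zero, zero_add] at this
      rw [Finset.sum_eq_single i] at this
      · simpa using this
      · intro b _ hb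
        have : (i : ℕ) ≠ b := fun h => hb (Fin.ext h.symm)
        simp [this]
      · simp
    have hev : ∀ t, γ t ⬝ᵥ s k = p.eval t := by
      intro t
      simp only [p, γ, dotProduct, Polynomial.eval_add, Polynomial.eval_C,
        Polynomial.eval_finsetSum, Polynomial.eval_mul, Polynomial.eval_pow, Polynomial.eval_X]
      rw [← Finset.sum_add_distrib]
      exact Finset.sum_congr rfl fun i _ => by ring
    have hfin : ((p.roots.toFinset : Set ℝ) \ {0}).Finite := (Finset.finite_toSet _).diff
    have hnh : ((p.roots.toFinset : Set ℝ) \ {0})ᶜ ∈ nhds (0 : ℝ) :=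
      hfin.isClosed.isOpen_compl.mem_nhds (by simp)
    filter_upwards [nhdsWithin_le_nhds hnh, hpos] with t h1 h2 h3
    apply h1
    refine ⟨?_, h2.ne'⟩
    simp only [Finset.mem_coe, Multiset.mem_toFinset]
    rw [Polynomial.mem_roots hp, Polynomial.IsRoot, ← hev, h3]
  filter_upwards [hpos, hne] with t h1 h2
  exact ⟨fun i => add_nonneg (hf i) (pow_pos h1 _).le, h2⟩

/-- good cost vectors -/
def GoodF {NG NL E : ℕ} (C : Matrix (Fin (NG + NL)) (Fin E) ℝ)
    (B : Matrix (Fin E) (Fin E) ℝ) (f : Fin NG → ℝ) : Prop :=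
  ∀ SG SB, (∃ θ, DirK C B SG SB θ ∧ θ ≠ 0) → ∃ θ, DirK C B SG SB θ ∧ f ⬝ᵥ genP C B θ ≠ 0

theorem good_dense {NG NL E : ℕ} {C : Matrix (Fin (NG + NL)) (Fin E) ℝ}
    {B : Matrix (Fin E) (Fin E) ℝ} (hConn : ConnectedIncidence C) (hB : PosDiag B)
    (hN : 0 < NG + NL) (f : Fin NG → ℝ) (hf : ∀ i, 0 ≤ f i) :
    f ∈ closure {g : Fin NG → ℝ | (∀ i, 0 ≤ g i) ∧ GoodF C B g} := by
  let ι := {S : Finset (Fin NG) × Finset (Fin E) // ∃ θ, DirK C B S.1 S.2 θ ∧ θ ≠ 0}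
  choose th hth using fun k : ι => k.2
  have := dense_core (fun k : ι => genP C B (th k))
    (fun k => genP_ne_zero hConn hB hN (hth k).1 (hth k).2) f hf
  refine closure_mono ?_ this
  rintro g ⟨h1, h2⟩
  refine ⟨h1, fun SG SB h => ?_⟩
  exact ⟨th ⟨(SG, SB), h⟩, (hth ⟨(SG, SB), h⟩).1, h2 ⟨(SG, SB), h⟩⟩

theorem feas_gen {NG NL E : ℕ} {C : Matrix (Fin (NG + NL)) (Fin E) ℝ}
    {B : Matrix (Fin E) (Fin E) ℝ} {ξ : XiT NG E} {sl : Fin NL → ℝ}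
    {sg : Fin NG → ℝ} {θ : Fin (NG + NL) → ℝ} (h : Feasible C B ξ sl sg θ) (i : Fin NG) :
    ((C * B * Cᵀ) *ᵥ θ) (Fin.castAdd NL i) = sg i := by
  rw [h.2.1, Fin.append_left]

theorem feas_load {NG NL E : ℕ} {C : Matrix (Fin (NG + NL)) (Fin E) ℝ}
    {B : Matrix (Fin E) (Fin E) ℝ} {ξ : XiT NG E} {sl : Fin NL → ℝ}
    {sg : Fin NG → ℝ} {θ : Fin (NG + NL) → ℝ} (h : Feasible C B ξ sl sg θ) (j : Fin NL) :
    ((C * B * Cᵀ) *ᵥ θ) (Fin.natAdd NG j) = -sl j := by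
  rw [h.2.1, Fin.append_right]

theorem exists_opt {NG NL E : ℕ} {C : Matrix (Fin (NG + NL)) (Fin E) ℝ}
    {B : Matrix (Fin E) (Fin E) ℝ} (hConn : ConnectedIncidence C) (hB : PosDiag B)
    (hN : 0 < NG + NL) (f : Fin NG → ℝ) {ξ : XiT NG E} {sl : Fin NL → ℝ}
    (hfe : ∃ sg θ, Feasible C B ξ sl sg θ) :
    ∃ p : (Fin NG → ℝ) × (Fin (NG + NL) → ℝ), IsOptimal C B f ξ sl p.1 p.2 := by
  let φ : ((Fin NG → ℝ) × (Fin (NG + NL) → ℝ)) →ₗ[ℝ] ((Fin NG → ℝ) × (Fin E → ℝ) × ℝ) :=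
    (LinearMap.fst ℝ _ _).prod
      ((((B * Cᵀ).mulVecLin).comp (LinearMap.snd ℝ _ _)).prod
        ((LinearMap.proj ⟨0, hN⟩).comp (LinearMap.snd ℝ _ _)))
  have hφ : ∀ p, φ p = (p.1, (B * Cᵀ) *ᵥ p.2, p.2 ⟨0, hN⟩) := fun p => rfl
  have hinj : LinearMap.ker φ = ⊥ := by
    rw [LinearMap.ker_eq_bot']
    rintro ⟨s, θ⟩ h
    rw [hφ] at h
    simp only [Prod.mk_eq_zero] at h
    rw [h.1, flow_zero hConn hB hN h.2.2 h.2.1]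
    rfl
  have hemb := LinearMap.isClosedEmbedding_of_injective hinj
  have hK : IsCompact (φ ⁻¹' (Set.Icc ξ.2.1 ξ.1 ×ˢ (Set.Icc ξ.2.2.2 ξ.2.2.1 ×ˢ {(0 : ℝ)}))) :=
    hemb.isCompact_preimage (isCompact_Icc.prod (isCompact_Icc.prod isCompact_singleton))
  have hcl : IsClosed {p : (Fin NG → ℝ) × (Fin (NG + NL) → ℝ) |
      (C * B * Cᵀ) *ᵥ p.2 = Fin.append p.1 (fun j => -(sl j))} := by
    have : {p : (Fin NG → ℝ) × (Fin (NG + NL) → ℝ) |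
      (C * B * Cᵀ) *ᵥ p.2 = Fin.append p.1 (fun j => -(sl j))} =
      {p | (∀ i, ((C * B * Cᵀ) *ᵥ p.2) (Fin.castAdd NL i) = p.1 i) ∧
        ∀ j, ((C * B * Cᵀ) *ᵥ p.2) (Fin.natAdd NG j) = - sl j} := by
      ext p
      constructor
      · intro h
        have h : (C * B * Cᵀ) *ᵥ p.2 = Fin.append p.1 (fun j => -(sl j)) := h
        exact ⟨fun i => by rw [h, Fin.append_left], fun j => by rw [h, Fin.append_right]⟩
      · rintro ⟨h1, h2⟩
        funext i
        refine Fin.addCases (fun i => ?_) (fun j => ?_) i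
        · rw [h1, Fin.append_left]
        · rw [h2, Fin.append_right]
    rw [this]
    have hc : Continuous fun p : (Fin NG → ℝ) × (Fin (NG + NL) → ℝ) => (C * B * Cᵀ) *ᵥ p.2 :=
      Continuous.matrix_mulVec continuous_const continuous_snd
    simp only [Set.setOf_and, Set.setOf_forall]
    refine IsClosed.inter (isClosed_iInter fun i => isClosed_eq ?_ ?_)
      (isClosed_iInter fun j => isClosed_eq ?_ continuous_const)
    · exact (continuous_apply _).comp hc
    · exact (continuous_apply _).comp continuous_fst
    · exact (continuous_apply _).comp hc
  have hset : ∀ p : (Fin NG → ℝ) × (Fin (NG + NL) → ℝ), Feasible C B ξ sl p.1 p.2 ↔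
      p ∈ (φ ⁻¹' (Set.Icc ξ.2.1 ξ.1 ×ˢ (Set.Icc ξ.2.2.2 ξ.2.2.1 ×ˢ {(0 : ℝ)}))) ∩
      {p : (Fin NG → ℝ) × (Fin (NG + NL) → ℝ) |
      (C * B * Cᵀ) *ᵥ p.2 = Fin.append p.1 (fun j => -(sl j))} := by
    intro p
    simp only [Set.mem_inter_iff, Set.mem_preimage, hφ, Set.mem_prod, Set.mem_Icc,
      Set.mem_singleton_iff, Set.mem_setOf_eq, Feasible, Pi.le_def]
    constructor
    · rintro ⟨h1, h2, h3, h4⟩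
      exact ⟨⟨⟨fun i => (h3 i).1, fun i => (h3 i).2⟩, ⟨fun i => (h4 i).1, fun i => (h4 i).2⟩,
        h1 hN⟩, h2⟩
    · rintro ⟨⟨⟨h1, h2⟩, ⟨h3, h4⟩, h5⟩, h6⟩
      exact ⟨fun _ => h5, h6, fun i => ⟨h1 i, h2 i⟩, fun e => ⟨h3 e, h4 e⟩⟩
  obtain ⟨s0, t0, h0⟩ := hfe
  have hcost : Continuous fun p : (Fin NG → ℝ) × (Fin (NG + NL) → ℝ) => f ⬝ᵥ p.1 :=
    Continuous.dotProduct continuous_const continuous_fst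
  obtain ⟨p, hp, hmin⟩ := (hK.inter_right hcl).exists_isMinOn ⟨(s0, t0), (hset (s0, t0)).1 h0⟩
    hcost.continuousOn
  refine ⟨p, (hset p).2 hp, fun s' t' h' => ?_⟩
  exact hmin ((hset (s', t')).1 h')

theorem slack_ev {a b c d : ℝ} (h1 : a ≤ b) (h2 : b ≤ c) (hd : (b = a ∨ b = c) → d = 0) :
    ∀ᶠ t : ℝ in nhds 0, a ≤ b + t * d ∧ b + t * d ≤ c := by
  by_cases h : b = a ∨ b = c
  · refine Filter.Eventually.of_forall fun t => ?_
    rw [hd h]; simp [h1, h2]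
  · push Not at h
    have hc : Filter.Tendsto (fun t : ℝ => b + t * d) (nhds 0) (nhds b) := by
      have : Continuous (fun t : ℝ => b + t * d) := by fun_prop
      simpa using this.tendsto 0
    filter_upwards [hc.eventually (lt_mem_nhds (lt_of_le_of_ne h1 (Ne.symm h.1))),
      hc.eventually (gt_mem_nhds (lt_of_le_of_ne h2 h.2))] with t h3 h4
    exact ⟨h3.le, h4.le⟩

theorem opt_unique {NG NL E : ℕ} {C : Matrix (Fin (NG + NL)) (Fin E) ℝ}
    {B : Matrix (Fin E) (Fin E) ℝ} {f : Fin NG → ℝ} (hf : GoodF C B f)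
    {ξ : XiT NG E} {sl : Fin NL → ℝ}
    {s s' : Fin NG → ℝ} {θ θ' : Fin (NG + NL) → ℝ}
    (h : IsOptimal C B f ξ sl s θ) (h' : IsOptimal C B f ξ sl s' θ') : θ = θ' := by
  classical
  by_contra hne
  obtain ⟨F, ho⟩ := h
  obtain ⟨F', ho'⟩ := h'
  -- midpoint
  let sm : Fin NG → ℝ := (1/2 : ℝ) • s + (1/2 : ℝ) • s'
  let tm : Fin (NG + NL) → ℝ := (1/2 : ℝ) • θ + (1/2 : ℝ) • θ'
  let P : (Fin (NG + NL) → ℝ) → Fin E → ℝ := fun x => (B * Cᵀ) *ᵥ x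
  let L : (Fin (NG + NL) → ℝ) → Fin (NG + NL) → ℝ := fun x => (C * B * Cᵀ) *ᵥ x
  have hsm : ∀ i, sm i = (s i + s' i) / 2 := fun i => by simp [sm]; ring
  have hPm : ∀ e, P tm e = (P θ e + P θ' e) / 2 := fun e => by
    simp [P, tm, Matrix.mulVec_add, Matrix.mulVec_smul]; ring
  have hLm : ∀ k, L tm k = (L θ k + L θ' k) / 2 := fun e => by
    simp [L, tm, Matrix.mulVec_add, Matrix.mulVec_smul]; ring
  let SG : Finset (Fin NG) := Finset.univ.filter fun i => sm i = ξ.2.1 i ∨ sm i = ξ.1 i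
  let SB : Finset (Fin E) := Finset.univ.filter fun e => P tm e = ξ.2.2.2 e ∨ P tm e = ξ.2.2.1 e
  have hK : DirK C B SG SB (θ - θ') := by
    refine ⟨fun h => ?_, fun j => ?_, fun i hi => ?_, fun e he => ?_⟩
    · simp [F.1 h, F'.1 h]
    · rw [Matrix.mulVec_sub, Pi.sub_apply, feas_load F, feas_load F', sub_self]
    · rw [Matrix.mulVec_sub, Pi.sub_apply, feas_gen F, feas_gen F']
      have h1 := F.2.2.1 i
      have h2 := F'.2.2.1 i
      have h3 := (Finset.mem_filter.1 hi).2
      rw [hsm] at h3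
      rcases h3 with h3 | h3 <;> linarith
    · rw [Matrix.mulVec_sub, Pi.sub_apply]
      have h1 := F.2.2.2 e
      have h2 := F'.2.2.2 e
      have h3 := (Finset.mem_filter.1 he).2
      rw [hPm] at h3
      simp only [P] at h3
      rcases h3 with h3 | h3 <;> linarith
  obtain ⟨d, hd, hfd⟩ := hf SG SB ⟨_, hK, sub_ne_zero.2 hne⟩
  have hev : ∀ᶠ t : ℝ in nhds 0, Feasible C B ξ sl (sm + t • genP C B d) (tm + t • d) := by
    have e1 : ∀ᶠ t : ℝ in nhds 0, ∀ i, ξ.2.1 i ≤ sm i + t * genP C B d i ∧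
        sm i + t * genP C B d i ≤ ξ.1 i := by
      rw [Filter.eventually_all]
      intro i
      have h1 := F.2.2.1 i
      have h2 := F'.2.2.1 i
      refine slack_ev (by rw [hsm]; linarith) (by rw [hsm]; linarith) fun h => ?_
      exact hd.2.2.1 i (Finset.mem_filter.2 ⟨Finset.mem_univ _, h⟩)
    have e2 : ∀ᶠ t : ℝ in nhds 0, ∀ e, ξ.2.2.2 e ≤ P tm e + t * P d e ∧
        P tm e + t * P d e ≤ ξ.2.2.1 e := by
      rw [Filter.eventually_all]
      intro e
      have h1 := F.2.2.2 e
      have h2 := F'.2.2.2 e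
      refine slack_ev (by rw [hPm]; simp only [P]; linarith)
        (by rw [hPm]; simp only [P]; linarith) fun h => ?_
      exact hd.2.2.2 e (Finset.mem_filter.2 ⟨Finset.mem_univ _, h⟩)
    filter_upwards [e1, e2] with t h1 h2
    refine ⟨fun h => ?_, ?_, fun i => ?_, fun e => ?_⟩
    · simp [tm, F.1 h, F'.1 h, hd.1 h]
    · funext k
      have hk : ((C * B * Cᵀ) *ᵥ (tm + t • d)) k = L tm k + t * L d k := by
        simp [L, Matrix.mulVec_add, Matrix.mulVec_smul]
      rw [hk, hLm]
      refine Fin.addCases (fun i => ?_) (fun j => ?_) k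
      · rw [Fin.append_left]
        simp only [L]
        rw [feas_gen F, feas_gen F']
        simp only [Pi.add_apply, Pi.smul_apply, smul_eq_mul, hsm, genP]
      · rw [Fin.append_right]
        simp only [L]
        rw [feas_load F, feas_load F', hd.2.1]
        ring
    · exact h1 i
    · have : ((B * Cᵀ) *ᵥ (tm + t • d)) e = P tm e + t * P d e := by
        simp [P, Matrix.mulVec_add, Matrix.mulVec_smul]
      rw [this]; exact h2 e
  have hcm : f ⬝ᵥ sm = f ⬝ᵥ s := by
    have h1 := ho _ _ F'
    have h2 := ho' _ _ F
    simp only [sm, dotProduct_add, dotProduct_smul, smul_eq_mul]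
    linarith
  obtain ⟨ε, hε, hball⟩ := Metric.eventually_nhds_iff.1 hev
  have key : ∀ t : ℝ, |t| < ε → 0 ≤ t * (f ⬝ᵥ genP C B d) := by
    intro t ht
    have h1 := ho _ _ (hball (y := t) (by simpa using ht))
    rw [dotProduct_add, dotProduct_smul, hcm, smul_eq_mul] at h1
    linarith
  have k1 := key (ε / 2) (by rw [abs_of_pos (by linarith)]; linarith)
  have k2 := key (-(ε / 2)) (by rw [abs_neg, abs_of_pos (by linarith)]; linarith)
  apply hfd
  have k3 : (ε / 2) * (f ⬝ᵥ genP C B d) = 0 := by linarith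
  exact (mul_eq_zero.1 k3).resolve_left (by linarith)

theorem kkt_count {NG NL E : ℕ} {C : Matrix (Fin (NG + NL)) (Fin E) ℝ}
    {B : Matrix (Fin E) (Fin E) ℝ} (hB : PosDiag B) (hN : 0 < NG + NL)
    {f : Fin NG → ℝ} (hf : GoodF C B f)
    {ξ : XiT NG E} {sl : Fin NL → ℝ} {sg : Fin NG → ℝ} {θ : Fin (NG + NL) → ℝ}
    {τ : Fin (NG + NL + 1) → ℝ} {μp μm : Fin E → ℝ} {lp lm : Fin NG → ℝ}
    (h : IsKKT C B f ξ sl sg θ τ μp μm lp lm) :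
    NG - 1 ≤ nnz μp + nnz μm + nnz lp + nnz lm := by
  classical
  by_contra hlt
  push Not at hlt
  obtain ⟨-, hst, hfe, -⟩ := h
  let SG : Finset (Fin NG) := (Finset.univ.filter fun i => lp i ≠ 0) ∪ (Finset.univ.filter fun i => lm i ≠ 0)
  let SB : Finset (Fin E) := (Finset.univ.filter fun e => μp e ≠ 0) ∪ (Finset.univ.filter fun e => μm e ≠ 0)
  have hnnz : ∀ {n : ℕ} (v : Fin n → ℝ), nnz v = (Finset.univ.filter fun i => v i ≠ 0).card := by
    intro n v
    rw [nnz, ← Set.ncard_coe_finset]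
    congr 1
    ext i; simp
  have hSG : SG.card ≤ nnz lp + nnz lm := by
    rw [hnnz, hnnz]; exact Finset.card_union_le _ _
  have hSB : SB.card ≤ nnz μp + nnz μm := by
    rw [hnnz, hnnz]; exact Finset.card_union_le _ _
  let φ : (Fin (NG + NL) → ℝ) →ₗ[ℝ] (ℝ × (Fin NL → ℝ) × (SG → ℝ) × (SB → ℝ)) :=
    (LinearMap.proj ⟨0, hN⟩).prod
      ((LinearMap.pi fun j : Fin NL =>
          (LinearMap.proj (Fin.natAdd NG j)).comp (C * B * Cᵀ).mulVecLin).prod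
        ((LinearMap.pi fun i : SG =>
          (LinearMap.proj (Fin.castAdd NL (i : Fin NG))).comp (C * B * Cᵀ).mulVecLin).prod
          (LinearMap.pi fun e : SB =>
            (LinearMap.proj (e : Fin E)).comp (B * Cᵀ).mulVecLin)))
  have hrank : Module.finrank ℝ (ℝ × (Fin NL → ℝ) × (SG → ℝ) × (SB → ℝ)) <
      Module.finrank ℝ (Fin (NG + NL) → ℝ) := by
    simp only [Module.finrank_prod, Module.finrank_self, Module.finrank_fintype_fun_eq_card,
      Fintype.card_fin, Fintype.card_coe]
    omega
  have hker := LinearMap.ker_ne_bot_of_finrank_lt (f := φ) hrank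
  obtain ⟨d0, hd0, hd0ne⟩ := (Submodule.ne_bot_iff _).1 hker
  rw [LinearMap.mem_ker] at hd0
  have hK0 : DirK C B SG SB d0 := by
    have a1 := congrArg (fun x => x.1) hd0
    have a2 := congrArg (fun x => x.2.1) hd0
    have a3 := congrArg (fun x => x.2.2.1) hd0
    have a4 := congrArg (fun x => x.2.2.2) hd0
    exact ⟨fun _ => a1, fun j => congrFun a2 j, fun i hi => congrFun a3 ⟨i, hi⟩,
      fun e he => congrFun a4 ⟨e, he⟩⟩
  obtain ⟨d, hd, hfd⟩ := hf SG SB ⟨d0, hK0, hd0ne⟩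
  apply hfd
  have hBt : Bᵀ = B := by
    ext i j
    by_cases hij : i = j
    · subst hij; rfl
    · rw [Matrix.transpose_apply, hB.2 _ _ hij, hB.2 _ _ (Ne.symm hij)]
  have e1 : τ ⬝ᵥ (Mmat C B *ᵥ d) + (μp - μm) ⬝ᵥ ((B * Cᵀ) *ᵥ d) = 0 := by
    have := congrArg (fun x => x ⬝ᵥ d) hst
    simp only [add_dotProduct, zero_dotProduct] at this
    have q1 : ((Mmat C B)ᵀ *ᵥ τ) ⬝ᵥ d = τ ⬝ᵥ (Mmat C B *ᵥ d) := by
      rw [Matrix.mulVec_transpose]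
      exact (Matrix.dotProduct_mulVec _ _ _).symm
    have q2 : ((C * B) *ᵥ (μp - μm)) ⬝ᵥ d = (μp - μm) ⬝ᵥ ((B * Cᵀ) *ᵥ d) := by
      rw [← Matrix.vecMul_transpose, Matrix.transpose_mul, hBt]
      exact (Matrix.dotProduct_mulVec _ _ _).symm
    rw [q1, q2] at this
    exact this
  have e2 : (μp - μm) ⬝ᵥ ((B * Cᵀ) *ᵥ d) = 0 := by
    refine Finset.sum_eq_zero fun e _ => ?_
    by_cases he : e ∈ SB
    · rw [hd.2.2.2 e he, mul_zero]
    · simp only [SB, Finset.mem_union, Finset.mem_filter, Finset.mem_univ, true_and, not_or,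
        not_not] at he
      simp [he.1, he.2]
  have e3 : τ ⬝ᵥ (Mmat C B *ᵥ d) = ∑ i : Fin NG, τ (Fin.castLE (by omega) i) * genP C B d i := by
    have hlast : (Mmat C B *ᵥ d) (Fin.last _) = 0 := by
      simp only [Matrix.mulVec, dotProduct, Mmat, Matrix.of_apply, Fin.val_last, lt_irrefl,
        dite_false]
      refine Finset.sum_eq_zero fun j _ => ?_
      split_ifs with hj
      · have : j = ⟨0, hN⟩ := Fin.ext hj
        rw [this, hd.1 hN, mul_zero]
      · simp
    have hcast : ∀ k : Fin (NG + NL), (Mmat C B *ᵥ d) k.castSucc = ((C * B * Cᵀ) *ᵥ d) k := by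
      intro k
      simp [Matrix.mulVec, dotProduct, Mmat]
    rw [dotProduct, Fin.sum_univ_castSucc, hlast, mul_zero, add_zero, Fin.sum_univ_add]
    simp only [hcast, hd.2.1, mul_zero, Finset.sum_const_zero, add_zero]
    rfl
  rw [e2, add_zero, e3] at e1
  rw [← e1, dotProduct]
  refine Finset.sum_congr rfl fun i _ => ?_
  by_cases hi : i ∈ SG
  · have : genP C B d i = 0 := hd.2.2.1 i hi
    rw [this]; simp
  · simp only [SG, Finset.mem_union, Finset.mem_filter, Finset.mem_univ, true_and, not_or,
        not_not] at hi
    have := hfe i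
    rw [hi.1, hi.2] at this
    congr 1
    linarith

theorem omegaF_dense {NG NL E : ℕ} (hNG : 0 < NG) (hNL : 0 < NL) (hE : 0 < E)
    (C : Matrix (Fin (NG + NL)) (Fin E) ℝ) (B : Matrix (Fin E) (Fin E) ℝ)
    (hInc : IsIncidence C) (hConn : ConnectedIncidence C) (hB : PosDiag B) :
    ∀ f : Fin NG → ℝ, (∀ i, 0 ≤ f i) → f ∈ closure (OmegaF C B) := by
  intro f hf
  have hN : 0 < NG + NL := by omega
  refine closure_mono ?_ (good_dense hConn hB hN f hf)
  rintro g ⟨hg0, hg⟩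
  refine ⟨hg0, fun ξ _ sl hsl => ⟨?_, ?_⟩⟩
  · obtain ⟨p, hp⟩ := exists_opt hConn hB hN g hsl.2
    refine ⟨p, hp, fun q hq => ?_⟩
    have ht : q.2 = p.2 := opt_unique hg hq hp
    refine Prod.ext ?_ ht
    funext i
    rw [← feas_gen hq.1, ← feas_gen hp.1, ht]
  · intro sg θ τ μp μm lp lm h
    exact kkt_count hB hN hg h

end
end

section
/- For every f ∈ Ω_f, the set D(f) := {ξ ∈ Ω_ξ : the closure of the interior of Ω_sl(ξ) equals the closure of Ω_sl(ξ) (closure and interior taken in ℝ^{N_L}), and ~Ω_sl(ξ, f) is dense in Ω_sl(ξ)} is dense in Ω_ξ (as a subset of ℝ^{2N_G+2E}). -/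
open Matrix

noncomputable section

/-- Complement of a proper affine hyperplane is open and dense. -/
lemma aux_dense_ne {X : Type*} [NormedAddCommGroup X] [NormedSpace ℝ X] [FiniteDimensional ℝ X]
    (φ : X →ₗ[ℝ] ℝ) (hφ : φ ≠ 0) (c : ℝ) : IsOpen {x | φ x ≠ c} ∧ Dense {x | φ x ≠ c} := by
  have hc : Continuous φ := φ.continuous_of_finiteDimensional
  refine ⟨isOpen_ne_fun hc continuous_const, ?_⟩
  obtain ⟨v, hv⟩ : ∃ v, φ v ≠ 0 := by
    by_contra h
    push Not at h
    exact hφ (LinearMap.ext h)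
  intro x
  by_cases hx : φ x = c
  · have ht : Filter.Tendsto (fun t : ℝ => x + t • v) (nhdsWithin 0 {0}ᶜ) (nhds x) := by
      have h1 : Continuous (fun t : ℝ => x + t • v) := by fun_prop
      have h2 := h1.tendsto 0
      simp only [zero_smul, add_zero] at h2
      exact h2.mono_left nhdsWithin_le_nhds
    refine mem_closure_of_tendsto ht ?_
    filter_upwards [self_mem_nhdsWithin] with t ht0
    simp only [Set.mem_setOf_eq, map_add, map_smul, hx, smul_eq_mul]
    intro h
    have : t * φ v = 0 := by linarith
    rcases mul_eq_zero.1 this with h | h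
    · exact ht0 h
    · exact hv h
  · exact subset_closure hx

lemma aux_dense_iInter {X ι : Type*} [NormedAddCommGroup X] [NormedSpace ℝ X]
    [FiniteDimensional ℝ X] [Finite ι] (s : ι → Set X)
    (h : ∀ i, IsOpen (s i) ∧ Dense (s i)) : Dense (⋂ i, s i) := by
  haveI : CompleteSpace X := FiniteDimensional.complete ℝ X
  exact dense_iInter_of_isOpen (fun i => (h i).1) (fun i => (h i).2)

/-- The constraint indices. -/
abbrev AuxIdx (NG E : ℕ) : Type := Fin NG ⊕ Fin NG ⊕ Fin E ⊕ Fin E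

/-- Left-hand side of a constraint. -/
def auxA {NG NL E : ℕ} (C : Matrix (Fin (NG + NL)) (Fin E) ℝ)
    (B : Matrix (Fin E) (Fin E) ℝ) : AuxIdx NG E → Fin (NG + NL) → ℝ
  | Sum.inl i => (C * B * Cᵀ) (Fin.castAdd NL i)
  | Sum.inr (Sum.inl i) => (C * B * Cᵀ) (Fin.castAdd NL i)
  | Sum.inr (Sum.inr (Sum.inl e)) => (B * Cᵀ) e
  | Sum.inr (Sum.inr (Sum.inr e)) => (B * Cᵀ) e

/-- Limit of a constraint. -/
def auxB {NG E : ℕ} (ξ : XiT NG E) : AuxIdx NG E → ℝ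
  | Sum.inl i => ξ.1 i
  | Sum.inr (Sum.inl i) => ξ.2.1 i
  | Sum.inr (Sum.inr (Sum.inl e)) => ξ.2.2.1 e
  | Sum.inr (Sum.inr (Sum.inr e)) => ξ.2.2.2 e

lemma aux_feasible_iff {NG NL E : ℕ} (C : Matrix (Fin (NG + NL)) (Fin E) ℝ)
    (B : Matrix (Fin E) (Fin E) ℝ) (ξ : XiT NG E) (sl : Fin NL → ℝ)
    (sg : Fin NG → ℝ) (θ : Fin (NG + NL) → ℝ) (h0 : 0 < NG + NL) :
    Feasible C B ξ sl sg θ ↔ θ ⟨0, h0⟩ = 0 ∧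
      (∀ i, ((C * B * Cᵀ) *ᵥ θ) (Fin.castAdd NL i) = sg i) ∧
      (∀ j, ((C * B * Cᵀ) *ᵥ θ) (Fin.natAdd NG j) = -sl j) ∧
      (∀ i, ξ.2.1 i ≤ sg i ∧ sg i ≤ ξ.1 i) ∧
      (∀ e, ξ.2.2.2 e ≤ ((B * Cᵀ) *ᵥ θ) e ∧ ((B * Cᵀ) *ᵥ θ) e ≤ ξ.2.2.1 e) := by
  unfold Feasible
  constructor
  · rintro ⟨a, b, c, d⟩
    refine ⟨a h0, fun i => ?_, fun j => ?_, c, d⟩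
    · rw [b]; simp
    · rw [b]; simp
  · rintro ⟨a, b, b', c, d⟩
    refine ⟨fun _ => a, ?_, c, d⟩
    funext k
    refine Fin.addCases (fun i => ?_) (fun j => ?_) k
    · rw [b]; simp
    · rw [b']; simp

lemma aux_bindingCount {NG NL E : ℕ} (C : Matrix (Fin (NG + NL)) (Fin E) ℝ)
    (B : Matrix (Fin E) (Fin E) ℝ) (ξ : XiT NG E) (sg : Fin NG → ℝ)
    (θ : Fin (NG + NL) → ℝ)
    (hsg : ∀ i, ((C * B * Cᵀ) *ᵥ θ) (Fin.castAdd NL i) = sg i) :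
    bindingCount C B ξ sg θ =
      (Finset.univ.filter (fun c => auxA C B c ⬝ᵥ θ = auxB ξ c)).card := by
  classical
  simp only [Finset.card_filter, Fintype.sum_sum_type, bindingCount]
  have key : ∀ {n : ℕ} (p : Fin n → Prop) [DecidablePred p],
      Set.ncard {i | p i} = ∑ i, if p i then 1 else 0 := by
    intro n p _
    rw [← Finset.card_filter, ← Set.ncard_coe_finset]
    simp
  have h1 : ∀ i, auxA C B (Sum.inl i) ⬝ᵥ θ = sg i := fun i => hsg i
  have h2 : ∀ i, auxA C B (Sum.inr (Sum.inl i)) ⬝ᵥ θ = sg i := fun i => hsg i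
  have h3 : ∀ e, auxA C B (Sum.inr (Sum.inr (Sum.inl e))) ⬝ᵥ θ = ((B * Cᵀ) *ᵥ θ) e :=
    fun _ => rfl
  have h4 : ∀ e, auxA C B (Sum.inr (Sum.inr (Sum.inr e))) ⬝ᵥ θ = ((B * Cᵀ) *ᵥ θ) e :=
    fun _ => rfl
  simp only [h1, h2, h3, h4, key, auxB]
  ring

/-- Solvability of the power flow equations. -/
lemma aux_solve {NG NL E : ℕ} (h0 : 0 < NG + NL)
    (C : Matrix (Fin (NG + NL)) (Fin E) ℝ) (B : Matrix (Fin E) (Fin E) ℝ)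
    (hConn : ConnectedIncidence C) (hB : PosDiag B)
    (y : Fin (NG + NL) → ℝ) (hy : ∑ i, y i = 0) (r : ℝ) :
    ∃ θ, θ ⟨0, h0⟩ = r ∧ (C * B * Cᵀ) *ᵥ θ = y := by
  set L := C * B * Cᵀ with hL
  have hone : ∀ c : ℝ, Cᵀ *ᵥ (fun _ => c) = 0 := fun c => (hConn _).2 ⟨c, rfl⟩
  have hLone : ∀ c : ℝ, L *ᵥ (fun _ => c) = 0 := by
    intro c
    rw [hL, ← Matrix.mulVec_mulVec, hone, Matrix.mulVec_zero]
  have hsum : ∀ θ, ∑ i, (L *ᵥ θ) i = 0 := by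
    intro θ
    have h : (fun _ => (1:ℝ)) ⬝ᵥ (L *ᵥ θ) = 0 := by
      rw [hL, Matrix.mul_assoc, ← Matrix.mulVec_mulVec, Matrix.dotProduct_mulVec,
        ← Matrix.mulVec_transpose, hone, zero_dotProduct]
    simpa [dotProduct] using h
  have hker : ∀ θ, L *ᵥ θ = 0 → ∃ c : ℝ, θ = fun _ => c := by
    intro θ h
    rw [← hConn]
    have h2 : (Cᵀ *ᵥ θ) ⬝ᵥ (B *ᵥ (Cᵀ *ᵥ θ)) = 0 := by
      have h3 : θ ⬝ᵥ (L *ᵥ θ) = 0 := by rw [h, dotProduct_zero]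
      rw [hL, Matrix.mul_assoc, ← Matrix.mulVec_mulVec, Matrix.dotProduct_mulVec,
        ← Matrix.mulVec_transpose, ← Matrix.mulVec_mulVec] at h3
      exact h3
    set z := Cᵀ *ᵥ θ with hz
    have hBz : ∀ e, (B *ᵥ z) e = B e e * z e := by
      intro e
      simp only [Matrix.mulVec, dotProduct]
      rw [Finset.sum_eq_single e]
      · intro b _ hb
        rw [hB.2 e b hb.symm, zero_mul]
      · simp
    have h4 : ∑ e, B e e * (z e * z e) = 0 := by
      rw [← h2]
      simp only [dotProduct, hBz]
      exact Finset.sum_congr rfl fun e _ => by ring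
    rw [Finset.sum_eq_zero_iff_of_nonneg
      (fun e _ => mul_nonneg (hB.1 e).le (mul_self_nonneg _))] at h4
    funext e
    have := h4 e (Finset.mem_univ e)
    rcases mul_eq_zero.1 this with h5 | h5
    · exact absurd h5 (hB.1 e).ne'
    · simpa using h5
  -- the map L + J
  let T : (Fin (NG + NL) → ℝ) →ₗ[ℝ] (Fin (NG + NL) → ℝ) :=
    L.mulVecLin + (LinearMap.pi fun _ => ∑ i, LinearMap.proj i)
  have hT : ∀ θ k, T θ k = (L *ᵥ θ) k + ∑ i, θ i := by
    intro θ k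
    simp [T]
  have hNpos : (0:ℝ) < ((NG + NL : ℕ) : ℝ) := by exact_mod_cast h0
  have hTsum : ∀ θ, ∑ k, T θ k = ((NG + NL : ℕ) : ℝ) * ∑ i, θ i := by
    intro θ
    simp only [hT, Finset.sum_add_distrib, hsum]
    simp
  have hinj : Function.Injective T := by
    rw [injective_iff_map_eq_zero]
    intro θ h
    have h1 := hTsum θ
    rw [h] at h1
    simp only [Pi.zero_apply, Finset.sum_const_zero] at h1
    have h2 : ∑ i, θ i = 0 := by
      rcases mul_eq_zero.1 h1.symm with h | h
      · exact absurd h hNpos.ne'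
      · exact h
    obtain ⟨c, hc⟩ := hker θ (by
      funext k
      have := hT θ k
      rw [h, h2] at this
      simpa using this.symm)
    have h3 : ((NG + NL : ℕ) : ℝ) * c = 0 := by
      rw [← h2, hc]; simp
    have h4 : c = 0 := by
      rcases mul_eq_zero.1 h3 with h | h
      · exact absurd h hNpos.ne'
      · exact h
    rw [hc, h4]; rfl
  obtain ⟨θ, hθ⟩ := (LinearMap.injective_iff_surjective.1 hinj) y
  have h1 := hTsum θ
  rw [hθ, hy] at h1
  have h2 : ∑ i, θ i = 0 := by
    rcases mul_eq_zero.1 h1.symm with h | h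
    · exact absurd h hNpos.ne'
    · exact h
  refine ⟨θ + (fun _ => r - θ ⟨0, h0⟩), by simp, ?_⟩
  rw [Matrix.mulVec_add, hLone, add_zero]
  funext k
  have := hT θ k
  rw [hθ, h2] at this
  simpa using this.symm

/-- Linear right inverse. -/
lemma aux_rightInv {NG NL E : ℕ} (hNG : 0 < NG) (h0 : 0 < NG + NL)
    (C : Matrix (Fin (NG + NL)) (Fin E) ℝ) (B : Matrix (Fin E) (Fin E) ℝ)
    (hConn : ConnectedIncidence C) (hB : PosDiag B) :
    ∃ G : (Fin NL → ℝ) →ₗ[ℝ] (Fin (NG + NL) → ℝ), ∀ v, G v ⟨0, h0⟩ = 0 ∧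
      ∀ j, ((C * B * Cᵀ) *ᵥ G v) (Fin.natAdd NG j) = - v j := by
  let Φ : (Fin (NG + NL) → ℝ) →ₗ[ℝ] (Fin NL → ℝ) × ℝ :=
    ((LinearMap.funLeft ℝ ℝ (Fin.natAdd NG)).comp (C * B * Cᵀ).mulVecLin).prod
      (LinearMap.proj ⟨0, h0⟩)
  have hΦ : Function.Surjective Φ := by
    rintro ⟨v, r⟩
    obtain ⟨θ, h1, h2⟩ := aux_solve h0 C B hConn hB
      (Fin.append (fun _ : Fin NG => -(∑ j, v j) / NG) v) (by
        rw [Fin.sum_univ_add]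
        simp
        field_simp
        ring) r
    refine ⟨θ, ?_⟩
    ext j
    · change ((C * B * Cᵀ) *ᵥ θ) (Fin.natAdd NG j) = v j
      rw [h2]; simp
    · simp [Φ, h1]
  obtain ⟨G, hG⟩ := Φ.exists_rightInverse_of_surjective (LinearMap.range_eq_top.2 hΦ)
  refine ⟨G.comp ((LinearMap.inl ℝ _ _).comp (-LinearMap.id)), fun v => ?_⟩
  have h : Φ (G (-v, 0)) = (-v, 0) := by
    have := LinearMap.congr_fun hG (-v, 0)
    exact this
  have h1 := congrArg Prod.fst h
  have h2 := congrArg Prod.snd h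
  constructor
  · exact h2
  · intro j
    have := congrFun h1 j
    exact this

/-- Too many binding constraints give a nontrivial relation. -/
lemma aux_relation {NG NL E : ℕ} (h0 : 0 < NG + NL)
    (C : Matrix (Fin (NG + NL)) (Fin E) ℝ) (B : Matrix (Fin E) (Fin E) ℝ)
    (S : Finset (AuxIdx NG E)) (hS : S.card = NG) :
    ∃ (u : Fin NL → ℝ) (w : S → ℝ), (u = 0 → w ≠ 0) ∧
      ∀ θ : Fin (NG + NL) → ℝ, θ ⟨0, h0⟩ = 0 →
        ∑ j, u j * ((C * B * Cᵀ) *ᵥ θ) (Fin.natAdd NG j)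
          + ∑ c : S, w c * (auxA C B c.1 ⬝ᵥ θ) = 0 := by
  classical
  let row : (Fin NL ⊕ S) ⊕ Unit → (Fin (NG + NL) → ℝ) :=
    Sum.elim (Sum.elim (fun j => (C * B * Cᵀ) (Fin.natAdd NG j)) (fun c => auxA C B c.1))
      (fun _ => Pi.single ⟨0, h0⟩ 1)
  have hdep : ¬ LinearIndependent ℝ row := by
    intro h
    have := h.fintype_card_le_finrank
    simp [hS] at this
    omega
  rw [Fintype.not_linearIndependent_iff] at hdep
  obtain ⟨g, hg, k, hk⟩ := hdep
  refine ⟨fun j => g (Sum.inl (Sum.inl j)), fun c => g (Sum.inl (Sum.inr c)), ?_, ?_⟩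
  · intro hu hw
    simp only [Fintype.sum_sum_type] at hg
    have hu' : ∀ j, g (Sum.inl (Sum.inl j)) = 0 := fun j => congrFun hu j
    have hw' : ∀ j, g (Sum.inl (Sum.inr j)) = 0 := fun j => congrFun hw j
    have h1 := congrFun hg ⟨0, h0⟩
    simp [hu', hw', row] at h1
    rcases k with (k | k) | k
    · exact hk (hu' k)
    · exact hk (hw' k)
    · exact hk h1
  · intro θ hθ
    have h1 : (∑ i, g i • row i) ⬝ᵥ θ = 0 := by rw [hg, zero_dotProduct]
    rw [sum_dotProduct] at h1
    simp only [Fintype.sum_sum_type, smul_dotProduct, smul_eq_mul, row, Sum.elim_inl,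
      Sum.elim_inr, single_dotProduct, hθ] at h1
    simpa [Matrix.mulVec] using h1

/-- A unique optimum has at least `NG - 1` binding constraints. -/
lemma aux_lower {NG NL E : ℕ} (h0 : 0 < NG + NL)
    (C : Matrix (Fin (NG + NL)) (Fin E) ℝ) (B : Matrix (Fin E) (Fin E) ℝ)
    (f : Fin NG → ℝ) (ξ : XiT NG E) (sl : Fin NL → ℝ)
    (huniq : ∃! p : (Fin NG → ℝ) × (Fin (NG + NL) → ℝ), IsOptimal C B f ξ sl p.1 p.2)
    (sg : Fin NG → ℝ) (θ : Fin (NG + NL) → ℝ) (hopt : IsOptimal C B f ξ sl sg θ) :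
    NG - 1 ≤ bindingCount C B ξ sg θ := by
  classical
  by_contra hlt
  push Not at hlt
  have hfeas := (aux_feasible_iff C B ξ sl sg θ h0).1 hopt.1
  obtain ⟨f1, f2, f3, f4, f5⟩ := hfeas
  rw [aux_bindingCount C B ξ sg θ f2] at hlt
  set S := Finset.univ.filter (fun c => auxA C B c ⬝ᵥ θ = auxB ξ c) with hSdef
  let Ψ : (Fin (NG + NL) → ℝ) →ₗ[ℝ] ((Fin NL ⊕ S) ⊕ Unit → ℝ) :=
    Matrix.mulVecLin (Matrix.of
      (Sum.elim (Sum.elim (fun j => (C * B * Cᵀ) (Fin.natAdd NG j)) (fun c => auxA C B c.1))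
      (fun _ => Pi.single ⟨0, h0⟩ 1)))
  have hker : LinearMap.ker Ψ ≠ ⊥ := by
    apply LinearMap.ker_ne_bot_of_finrank_lt
    simp
    omega
  obtain ⟨d, hd, hd0⟩ := Submodule.exists_mem_ne_zero_of_ne_bot hker
  rw [LinearMap.mem_ker] at hd
  have d1 : d ⟨0, h0⟩ = 0 := by
    have := congrFun hd (Sum.inr ())
    simpa [Ψ, Matrix.mulVec] using this
  have d2 : ∀ j, ((C * B * Cᵀ) *ᵥ d) (Fin.natAdd NG j) = 0 := by
    intro j
    exact congrFun hd (Sum.inl (Sum.inl j))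
  have d3 : ∀ c, auxA C B c ⬝ᵥ θ = auxB ξ c → auxA C B c ⬝ᵥ d = 0 := by
    intro c hc
    exact congrFun hd (Sum.inl (Sum.inr ⟨c, by simp [hSdef, hc]⟩))
  -- perturbation
  let dg : Fin NG → ℝ := fun i => ((C * B * Cᵀ) *ᵥ d) (Fin.castAdd NL i)
  have hev : ∀ (c : AuxIdx NG E), (auxA C B c ⬝ᵥ θ ≤ auxB ξ c →
      ∀ᶠ t : ℝ in nhds 0, auxA C B c ⬝ᵥ θ + t * (auxA C B c ⬝ᵥ d) ≤ auxB ξ c) ∧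
      (auxB ξ c ≤ auxA C B c ⬝ᵥ θ →
      ∀ᶠ t : ℝ in nhds 0, auxB ξ c ≤ auxA C B c ⬝ᵥ θ + t * (auxA C B c ⬝ᵥ d)) := by
    intro c
    have hcont : Continuous (fun t : ℝ => auxA C B c ⬝ᵥ θ + t * (auxA C B c ⬝ᵥ d)) := by fun_prop
    have hT := hcont.tendsto 0
    simp only [zero_mul, add_zero] at hT
    by_cases hc : auxA C B c ⬝ᵥ θ = auxB ξ c
    · simp [d3 c hc, hc]
    · constructor
      · intro hle
        exact (hT.eventually_lt_const (lt_of_le_of_ne hle hc)).mono fun _ h => h.le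
      · intro hle
        exact (hT.eventually_const_lt (lt_of_le_of_ne hle (Ne.symm hc))).mono fun _ h => h.le
  have hev' : ∀ᶠ t : ℝ in nhds 0, Feasible C B ξ sl (sg + t • dg) (θ + t • d) := by
    have g1 : ∀ᶠ t : ℝ in nhds 0, ∀ i, sg i + t * dg i ≤ ξ.1 i := by
      rw [Filter.eventually_all]
      intro i
      have := (hev (Sum.inl i)).1 (by have := (f4 i).2; rw [← f2] at this; exact this)
      filter_upwards [this] with t ht
      rw [← f2]; exact ht
    have g2 : ∀ᶠ t : ℝ in nhds 0, ∀ i, ξ.2.1 i ≤ sg i + t * dg i := by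
      rw [Filter.eventually_all]
      intro i
      have := (hev (Sum.inr (Sum.inl i))).2 (by have := (f4 i).1; rw [← f2] at this; exact this)
      filter_upwards [this] with t ht
      rw [← f2]; exact ht
    have g3 : ∀ᶠ t : ℝ in nhds 0, ∀ e,
        ((B * Cᵀ) *ᵥ θ) e + t * ((B * Cᵀ) *ᵥ d) e ≤ ξ.2.2.1 e := by
      rw [Filter.eventually_all]
      intro e
      exact (hev (Sum.inr (Sum.inr (Sum.inl e)))).1 (f5 e).2
    have g4 : ∀ᶠ t : ℝ in nhds 0, ∀ e,
        ξ.2.2.2 e ≤ ((B * Cᵀ) *ᵥ θ) e + t * ((B * Cᵀ) *ᵥ d) e := by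
      rw [Filter.eventually_all]
      intro e
      exact (hev (Sum.inr (Sum.inr (Sum.inr e)))).2 (f5 e).1
    filter_upwards [g1, g2, g3, g4] with t h1 h2 h3 h4
    rw [aux_feasible_iff C B ξ sl _ _ h0]
    refine ⟨by simp [f1, d1], fun i => ?_, fun j => ?_, fun i => ⟨h2 i, h1 i⟩, fun e => ?_⟩
    · simp [Matrix.mulVec_add, Matrix.mulVec_smul, f2, dg]
    · simp [Matrix.mulVec_add, Matrix.mulVec_smul, f3, d2]
    · rw [Matrix.mulVec_add, Matrix.mulVec_smul]
      exact ⟨h4 e, h3 e⟩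
  have hneg : ∀ᶠ t : ℝ in nhds 0, Feasible C B ξ sl (sg + (-t) • dg) (θ + (-t) • d) := by
    have : Filter.Tendsto (fun t : ℝ => -t) (nhds 0) (nhds 0) := by
      simpa using (continuous_neg.tendsto (0:ℝ))
    exact this.eventually hev'
  obtain ⟨t, ⟨hp, hm⟩, ht⟩ := (((hev'.and hneg).filter_mono
    (nhdsWithin_le_nhds (s := {0}ᶜ))).and self_mem_nhdsWithin).exists
  have ht0 : t ≠ 0 := ht
  have op := hopt.2 _ _ hp
  have om := hopt.2 _ _ hm
  simp only [dotProduct_add, dotProduct_smul, smul_eq_mul] at op om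
  have hz : t * (f ⬝ᵥ dg) = 0 := by linarith
  have hopt' : IsOptimal C B f ξ sl (sg + t • dg) (θ + t • d) := by
    refine ⟨hp, fun sg' θ' h => ?_⟩
    have := hopt.2 _ _ h
    simp only [dotProduct_add, dotProduct_smul, smul_eq_mul]
    linarith
  have he := huniq.unique (y₁ := (sg, θ)) (y₂ := (sg + t • dg, θ + t • d)) hopt hopt'
  have he2 : θ = θ + t • d := congrArg Prod.snd he
  have : t • d = 0 := by simpa using he2
  rcases smul_eq_zero.1 this with h | h
  · exact ht0 h
  · exact hd0 h

/-- Limits admitting a strictly feasible point. -/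
def auxU {NG NL E : ℕ} (h0 : 0 < NG + NL) (C : Matrix (Fin (NG + NL)) (Fin E) ℝ)
    (B : Matrix (Fin E) (Fin E) ℝ) : Set (XiT NG E) :=
  { ξ | (∀ i, 0 < ξ.2.1 i) ∧ ∃ θ : Fin (NG + NL) → ℝ, θ ⟨0, h0⟩ = 0 ∧
    (∀ j, ((C * B * Cᵀ) *ᵥ θ) (Fin.natAdd NG j) < 0) ∧
    (∀ i, ξ.2.1 i < ((C * B * Cᵀ) *ᵥ θ) (Fin.castAdd NL i) ∧
      ((C * B * Cᵀ) *ᵥ θ) (Fin.castAdd NL i) < ξ.1 i) ∧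
    (∀ e, ξ.2.2.2 e < ((B * Cᵀ) *ᵥ θ) e ∧ ((B * Cᵀ) *ᵥ θ) e < ξ.2.2.1 e) }

lemma auxU_subset {NG NL E : ℕ} (h0 : 0 < NG + NL) (C : Matrix (Fin (NG + NL)) (Fin E) ℝ)
    (B : Matrix (Fin E) (Fin E) ℝ) : auxU h0 C B ⊆ OmegaXi C B := by
  rintro ξ ⟨hpos, θ, h1, h2, h3, h4⟩
  refine ⟨fun i => (hpos i).le, fun i => (h3 i).1.trans (h3 i).2,
    fun e => (h4 e).1.trans (h4 e).2,
    fun j => -((C * B * Cᵀ) *ᵥ θ) (Fin.natAdd NG j), fun j => by linarith [h2 j],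
    fun i => ((C * B * Cᵀ) *ᵥ θ) (Fin.castAdd NL i), θ, ?_⟩
  rw [aux_feasible_iff _ _ _ _ _ _ h0]
  exact ⟨h1, fun _ => rfl, fun _ => by simp, fun i => ⟨(h3 i).1.le, (h3 i).2.le⟩,
    fun e => ⟨(h4 e).1.le, (h4 e).2.le⟩⟩

lemma auxU_open {NG NL E : ℕ} (h0 : 0 < NG + NL) (C : Matrix (Fin (NG + NL)) (Fin E) ℝ)
    (B : Matrix (Fin E) (Fin E) ℝ) : IsOpen (auxU h0 C B) := by
  rw [isOpen_iff_mem_nhds]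
  rintro ξ ⟨hpos, θ, h1, h2, h3, h4⟩
  have e1 : ∀ᶠ η : XiT NG E in nhds ξ, ∀ i, 0 < η.2.1 i := by
    rw [Filter.eventually_all]
    intro i
    exact (isOpen_lt (by fun_prop) (by fun_prop)).mem_nhds (hpos i)
  have e2 : ∀ᶠ η : XiT NG E in nhds ξ, ∀ i, η.2.1 i < ((C * B * Cᵀ) *ᵥ θ) (Fin.castAdd NL i) := by
    rw [Filter.eventually_all]
    intro i
    exact (isOpen_lt (by fun_prop) (by fun_prop)).mem_nhds (h3 i).1
  have e3 : ∀ᶠ η : XiT NG E in nhds ξ, ∀ i, ((C * B * Cᵀ) *ᵥ θ) (Fin.castAdd NL i) < η.1 i := by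
    rw [Filter.eventually_all]
    intro i
    exact (isOpen_lt (by fun_prop) (by fun_prop)).mem_nhds (h3 i).2
  have e4 : ∀ᶠ η : XiT NG E in nhds ξ, ∀ e, η.2.2.2 e < ((B * Cᵀ) *ᵥ θ) e := by
    rw [Filter.eventually_all]
    intro i
    exact (isOpen_lt (by fun_prop) (by fun_prop)).mem_nhds (h4 i).1
  have e5 : ∀ᶠ η : XiT NG E in nhds ξ, ∀ e, ((B * Cᵀ) *ᵥ θ) e < η.2.2.1 e := by
    rw [Filter.eventually_all]
    intro i
    exact (isOpen_lt (by fun_prop) (by fun_prop)).mem_nhds (h4 i).2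
  filter_upwards [e1, e2, e3, e4, e5] with η g1 g2 g3 g4 g5
  exact ⟨g1, θ, h1, h2, fun i => ⟨g2 i, g3 i⟩, fun e => ⟨g4 e, g5 e⟩⟩

lemma auxU_closure {NG NL E : ℕ} (hNG : 0 < NG) (hNL : 0 < NL) (h0 : 0 < NG + NL)
    (C : Matrix (Fin (NG + NL)) (Fin E) ℝ)
    (B : Matrix (Fin E) (Fin E) ℝ) (hConn : ConnectedIncidence C) (hB : PosDiag B) :
    OmegaXi C B ⊆ closure (auxU h0 C B) := by
  rintro ξ ⟨a1, a2, a3, sl, hsl, sg, θ, hf⟩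
  rw [aux_feasible_iff _ _ _ _ _ _ h0] at hf
  obtain ⟨f1, f2, f3, f4, f5⟩ := hf
  have hNGr : (0:ℝ) < NG := by exact_mod_cast hNG
  have hNLr : (0:ℝ) < NL := by exact_mod_cast hNL
  obtain ⟨θ₀, g1, g2⟩ := aux_solve h0 C B hConn hB
      (Fin.append (fun _ : Fin NG => (1:ℝ)) (fun _ : Fin NL => -(NG:ℝ) / NL)) (by
        rw [Fin.sum_univ_add]
        simp
        field_simp
        ring) 0
  let ξ₀ : XiT NG E := (fun _ => 2, fun _ => 1/2, fun e => ((B * Cᵀ) *ᵥ θ₀) e + 1,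
    fun e => ((B * Cᵀ) *ᵥ θ₀) e - 1)
  have ht : Filter.Tendsto (fun t : ℝ => (1 - t) • ξ + t • ξ₀) (nhdsWithin 0 (Set.Ioi 0))
      (nhds ξ) := by
    have h1 : Continuous (fun t : ℝ => (1 - t) • ξ + t • ξ₀) := by fun_prop
    have h2 := h1.tendsto 0
    simp only [zero_smul, add_zero, sub_zero, one_smul] at h2
    exact h2.mono_left nhdsWithin_le_nhds
  refine mem_closure_of_tendsto ht ?_
  filter_upwards [Ioo_mem_nhdsGT (zero_lt_one : (0:ℝ) < 1)] with t htt
  obtain ⟨t0, t1⟩ := htt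
  have s0 : 0 < 1 - t := by linarith
  refine ⟨fun i => ?_, (1 - t) • θ + t • θ₀, ?_, fun j => ?_, fun i => ?_, fun e => ?_⟩
  · simp only [Prod.snd_add, Prod.fst_add, Prod.smul_fst, Prod.smul_snd, Pi.add_apply,
      Pi.smul_apply, smul_eq_mul, ξ₀]
    have := mul_nonneg s0.le (a1 i)
    linarith
  · simp [f1, g1]
  · rw [Matrix.mulVec_add, Matrix.mulVec_smul, Matrix.mulVec_smul, g2]
    simp only [Pi.add_apply, Pi.smul_apply, smul_eq_mul, f3, Fin.append_right]
    have h1 := mul_pos s0 (hsl j)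
    have h2 : 0 < t * ((NG:ℝ) / NL) := by positivity
    have h3 : t * (-(NG:ℝ) / NL) = - (t * ((NG:ℝ) / NL)) := by ring
    rw [h3]
    linarith
  · rw [Matrix.mulVec_add, Matrix.mulVec_smul, Matrix.mulVec_smul, g2]
    simp only [Prod.snd_add, Prod.fst_add, Prod.smul_fst, Prod.smul_snd, Pi.add_apply,
      Pi.smul_apply, smul_eq_mul, ξ₀, f2, Fin.append_left]
    have h1 := mul_le_mul_of_nonneg_left (f4 i).1 s0.le
    have h2 := mul_le_mul_of_nonneg_left (f4 i).2 s0.le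
    constructor <;> linarith
  · rw [Matrix.mulVec_add, Matrix.mulVec_smul, Matrix.mulVec_smul]
    simp only [Prod.snd_add, Prod.fst_add, Prod.smul_fst, Prod.smul_snd, Pi.add_apply,
      Pi.smul_apply, smul_eq_mul, ξ₀]
    have h1 := mul_le_mul_of_nonneg_left (f5 e).1 s0.le
    have h2 := mul_le_mul_of_nonneg_left (f5 e).2 s0.le
    constructor <;> linarith

lemma aux_convex {NG NL E : ℕ} (h0 : 0 < NG + NL) (C : Matrix (Fin (NG + NL)) (Fin E) ℝ)
    (B : Matrix (Fin E) (Fin E) ℝ) (ξ : XiT NG E) : Convex ℝ (OmegaSl C B ξ) := by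
  rintro x ⟨hx, sg, θ, hf⟩ y ⟨hy, sg', θ', hf'⟩ a b ha hb hab
  rw [aux_feasible_iff _ _ _ _ _ _ h0] at hf hf'
  obtain ⟨f1, f2, f3, f4, f5⟩ := hf
  obtain ⟨g1, g2, g3, g4, g5⟩ := hf'
  refine ⟨fun j => ?_, a • sg + b • sg', a • θ + b • θ', ?_⟩
  · exact (convex_Ioi (0:ℝ)) (hx j) (hy j) ha hb hab
  · rw [aux_feasible_iff _ _ _ _ _ _ h0]
    refine ⟨by simp [f1, g1], fun i => ?_, fun j => ?_, fun i => ?_, fun e => ?_⟩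
    · simp [Matrix.mulVec_add, Matrix.mulVec_smul, f2, g2]
    · simp [Matrix.mulVec_add, Matrix.mulVec_smul, f3, g3]
      ring
    · exact (convex_Icc (ξ.2.1 i) (ξ.1 i)) (f4 i) (g4 i) ha hb hab
    · rw [Matrix.mulVec_add, Matrix.mulVec_smul, Matrix.mulVec_smul]
      exact (convex_Icc (ξ.2.2.2 e) (ξ.2.2.1 e)) (f5 e) (g5 e) ha hb hab

lemma aux_interior {NG NL E : ℕ} (hNG : 0 < NG) (h0 : 0 < NG + NL)
    (C : Matrix (Fin (NG + NL)) (Fin E) ℝ)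
    (B : Matrix (Fin E) (Fin E) ℝ) (hConn : ConnectedIncidence C) (hB : PosDiag B)
    (ξ : XiT NG E) (hξ : ξ ∈ auxU h0 C B) : (interior (OmegaSl C B ξ)).Nonempty := by
  obtain ⟨hpos, θ, h1, h2, h3, h4⟩ := hξ
  obtain ⟨G, hG⟩ := aux_rightInv hNG h0 C B hConn hB
  have hGc : Continuous G := G.continuous_of_finiteDimensional
  let x : Fin NL → ℝ := fun j => -((C * B * Cᵀ) *ᵥ θ) (Fin.natAdd NG j)
  refine ⟨x, mem_interior_iff_mem_nhds.2 ?_⟩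
  let Θ : (Fin NL → ℝ) → (Fin (NG + NL) → ℝ) := fun y => θ + G (y - x)
  have hΘ : Continuous Θ := by fun_prop
  have hΘx : Θ x = θ := by simp [Θ]
  have hL : ∀ k, Continuous fun y => ((C * B * Cᵀ) *ᵥ Θ y) k := by
    intro k
    exact (continuous_apply k).comp (Continuous.matrix_mulVec continuous_const hΘ)
  have hF : ∀ k, Continuous fun y => ((B * Cᵀ) *ᵥ Θ y) k := by
    intro k
    exact (continuous_apply k).comp (Continuous.matrix_mulVec continuous_const hΘ)
  have e1 : ∀ᶠ y in nhds x, ∀ j, 0 < y j := by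
    rw [Filter.eventually_all]
    intro j
    exact (isOpen_lt (by fun_prop) (by fun_prop)).mem_nhds
      (show 0 < x j by simp only [x]; linarith [h2 j])
  have e2 : ∀ᶠ y in nhds x, ∀ i, ξ.2.1 i < ((C * B * Cᵀ) *ᵥ Θ y) (Fin.castAdd NL i) := by
    rw [Filter.eventually_all]
    intro i
    exact (isOpen_lt continuous_const (hL _)).mem_nhds
      (by simp only [Set.mem_setOf_eq, hΘx]; exact (h3 i).1)
  have e3 : ∀ᶠ y in nhds x, ∀ i, ((C * B * Cᵀ) *ᵥ Θ y) (Fin.castAdd NL i) < ξ.1 i := by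
    rw [Filter.eventually_all]
    intro i
    exact (isOpen_lt (hL _) continuous_const).mem_nhds
      (by simp only [Set.mem_setOf_eq, hΘx]; exact (h3 i).2)
  have e4 : ∀ᶠ y in nhds x, ∀ e, ξ.2.2.2 e < ((B * Cᵀ) *ᵥ Θ y) e := by
    rw [Filter.eventually_all]
    intro i
    exact (isOpen_lt continuous_const (hF _)).mem_nhds
      (by simp only [Set.mem_setOf_eq, hΘx]; exact (h4 i).1)
  have e5 : ∀ᶠ y in nhds x, ∀ e, ((B * Cᵀ) *ᵥ Θ y) e < ξ.2.2.1 e := by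
    rw [Filter.eventually_all]
    intro i
    exact (isOpen_lt (hF _) continuous_const).mem_nhds
      (by simp only [Set.mem_setOf_eq, hΘx]; exact (h4 i).2)
  filter_upwards [e1, e2, e3, e4, e5] with y g1 g2 g3 g4 g5
  refine ⟨g1, fun i => ((C * B * Cᵀ) *ᵥ Θ y) (Fin.castAdd NL i), Θ y, ?_⟩
  rw [aux_feasible_iff _ _ _ _ _ _ h0]
  refine ⟨by simp [Θ, h1, hG], fun _ => rfl, fun j => ?_, fun i => ⟨(g2 i).le, (g3 i).le⟩,
    fun e => ⟨(g4 e).le, (g5 e).le⟩⟩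
  have := (hG (y - x)).2 j
  simp only [Θ, Matrix.mulVec_add, Pi.add_apply, this, Pi.sub_apply, x]
  ring


theorem good_limits_dense {NG NL E : ℕ} (hNG : 0 < NG) (hNL : 0 < NL) (hE : 0 < E)
    (C : Matrix (Fin (NG + NL)) (Fin E) ℝ) (B : Matrix (Fin E) (Fin E) ℝ)
    (hInc : IsIncidence C) (hConn : ConnectedIncidence C) (hB : PosDiag B) :
    ∀ f ∈ OmegaF C B,
      OmegaXi C B ⊆ closure { ξ : XiT NG E | ξ ∈ OmegaXi C B ∧
        closure (interior (OmegaSl C B ξ)) = closure (OmegaSl C B ξ) ∧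
        OmegaSl C B ξ ⊆ closure (TOmegaSl C B f ξ) } := by
  classical
  intro f hf
  have h0 : 0 < NG + NL := by omega
  have hrel := fun S : {S : Finset (AuxIdx NG E) // S.card = NG} =>
    aux_relation h0 C B S.1 S.2
  choose u w huw hrel using hrel
  -- the functionals on the space of limits
  let φ : {S : Finset (AuxIdx NG E) // S.card = NG} → XiT NG E →ₗ[ℝ] ℝ := fun S =>
    { toFun := fun ξ => ∑ c : S.1, w S c * auxB ξ c.1
      map_add' := by
        intro ξ η
        rw [← Finset.sum_add_distrib]
        refine Finset.sum_congr rfl fun c _ => ?_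
        rcases c with ⟨(c | c | c | c), hc⟩ <;> simp [auxB, mul_add]
      map_smul' := by
        intro r ξ
        rw [RingHom.id_apply, smul_eq_mul, Finset.mul_sum]
        refine Finset.sum_congr rfl fun c _ => ?_
        rcases c with ⟨(c | c | c | c), hc⟩ <;> simp [auxB] <;> ring }
  have hφ : ∀ S, u S = 0 → φ S ≠ 0 := by
    intro S hu hz
    apply huw S hu
    let g : AuxIdx NG E → ℝ := fun c => if hc : c ∈ S.1 then w S ⟨c, hc⟩ else 0
    let η : XiT NG E := (fun i => g (Sum.inl i), fun i => g (Sum.inr (Sum.inl i)),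
      fun e => g (Sum.inr (Sum.inr (Sum.inl e))), fun e => g (Sum.inr (Sum.inr (Sum.inr e))))
    have hη : ∀ c, auxB η c = g c := by
      rintro (c | c | c | c) <;> rfl
    have h1 : ∑ c : S.1, w S c * auxB η c.1 = 0 := LinearMap.congr_fun hz η
    have h2 : ∑ c : S.1, w S c * w S c = 0 := by
      rw [← h1]
      refine Finset.sum_congr rfl fun c _ => ?_
      rw [hη]
      simp [g]
    rw [Finset.sum_eq_zero_iff_of_nonneg (fun c _ => mul_self_nonneg _)] at h2
    funext c
    simpa using h2 c (Finset.mem_univ c)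
  have hD : Dense (⋂ S, {ξ : XiT NG E | u S = 0 → φ S ξ ≠ 0}) := by
    apply aux_dense_iInter
    intro S
    by_cases hu : u S = 0
    · simpa [hu] using aux_dense_ne (φ S) (hφ S hu) 0
    · simp [hu]
  refine (auxU_closure hNG hNL h0 C B hConn hB).trans ?_
  refine closure_minimal ((hD.open_subset_closure_inter (auxU_open h0 C B)).trans
    (closure_mono ?_)) isClosed_closure
  rintro ξ ⟨hξU, hξD⟩
  have hξ := auxU_subset h0 C B hξU
  have hcl : closure (interior (OmegaSl C B ξ)) = closure (OmegaSl C B ξ) :=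
    (aux_convex h0 C B ξ).closure_interior_eq_closure_of_nonempty_interior
      (aux_interior hNG h0 C B hConn hB ξ hξU)
  refine ⟨hξ, hcl, ?_⟩
  let ψ : {S : Finset (AuxIdx NG E) // S.card = NG} → (Fin NL → ℝ) →ₗ[ℝ] ℝ := fun S =>
    ∑ j, u S j • LinearMap.proj j
  have hψ : ∀ S x, ψ S x = ∑ j, u S j * x j := by
    intro S x
    simp [ψ]
  have hψ0 : ∀ S, u S ≠ 0 → ψ S ≠ 0 := by
    intro S hu hz
    apply hu
    funext j
    have := LinearMap.congr_fun hz (Pi.single j 1)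
    simpa [hψ, Pi.single_apply] using this
  have hE' : Dense (⋂ S, {x : Fin NL → ℝ | u S ≠ 0 → ψ S x ≠ φ S ξ}) := by
    apply aux_dense_iInter
    intro S
    by_cases hu : u S = 0
    · simp [hu]
    · simpa [hu] using aux_dense_ne (ψ S) (hψ0 S hu) (φ S ξ)
  refine subset_closure.trans (hcl.symm.subset.trans ?_)
  refine closure_minimal ((hE'.open_subset_closure_inter isOpen_interior).trans
    (closure_mono ?_)) isClosed_closure
  rintro sl ⟨hsl, hslE⟩
  have hsl' := interior_subset hsl
  refine ⟨hsl', fun sg θ hopt => ?_⟩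
  have hlow := aux_lower h0 C B f ξ sl (hf.2 ξ hξ sl hsl').1 sg θ hopt
  refine le_antisymm ?_ hlow
  by_contra hgt
  push Not at hgt
  obtain ⟨f1, f2, f3, f4, f5⟩ := (aux_feasible_iff C B ξ sl sg θ h0).1 hopt.1
  rw [aux_bindingCount C B ξ sg θ f2] at hgt
  obtain ⟨S, hSsub, hScard⟩ := Finset.exists_subset_card_eq
    (show NG ≤ (Finset.univ.filter (fun c => auxA C B c ⬝ᵥ θ = auxB ξ c)).card by omega)
  have hr := hrel ⟨S, hScard⟩ θ f1
  have hr2 : φ ⟨S, hScard⟩ ξ = ψ ⟨S, hScard⟩ sl := by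
    have e1 : ∑ c : S, w ⟨S, hScard⟩ c * (auxA C B c.1 ⬝ᵥ θ) = φ ⟨S, hScard⟩ ξ := by
      refine Finset.sum_congr rfl fun c _ => ?_
      have := (Finset.mem_filter.1 (hSsub c.2)).2
      rw [this]
    have e2 : ∑ j, u ⟨S, hScard⟩ j * ((C * B * Cᵀ) *ᵥ θ) (Fin.natAdd NG j)
        = - ψ ⟨S, hScard⟩ sl := by
      rw [hψ, ← Finset.sum_neg_distrib]
      refine Finset.sum_congr rfl fun j _ => ?_
      rw [f3]; ring
    have hr' : - ψ ⟨S, hScard⟩ sl + φ ⟨S, hScard⟩ ξ = 0 := by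
      rw [← e1, ← e2]; exact hr
    linarith
  by_cases hu : u ⟨S, hScard⟩ = 0
  · have h1 := Set.mem_iInter.1 hξD ⟨S, hScard⟩ hu
    apply h1
    rw [hr2, hψ, hu]
    simp
  · exact Set.mem_iInter.1 hslE ⟨S, hScard⟩ hu hr2.symm

end
end

section
/- For every f ∈ Ω_f there exists a subset D ⊆ Ω_ξ, dense in Ω_ξ, such that for every ξ ∈ D the set Ω_sl(ξ) \ ~Ω_sl(ξ, f) is contained in a finite union of affine subspaces of ℝ^{N_L} each of dimension strictly less than N_L. -/
open Matrix

noncomputable section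

/-! ### Helper material for the proof -/

abbrev JT (NG E : ℕ) : Type := Fin NG ⊕ Fin NG ⊕ Fin E ⊕ Fin E

/-- The linear functional of `θ` appearing in each inequality constraint. -/
def rowJ {NG NL E : ℕ} (C : Matrix (Fin (NG + NL)) (Fin E) ℝ)
    (B : Matrix (Fin E) (Fin E) ℝ) : JT NG E → ((Fin (NG + NL) → ℝ) →ₗ[ℝ] ℝ)
  | Sum.inl i => LinearMap.proj (Fin.castAdd NL i) ∘ₗ Matrix.mulVecLin (C * B * Cᵀ)
  | Sum.inr (Sum.inl i) => LinearMap.proj (Fin.castAdd NL i) ∘ₗ Matrix.mulVecLin (C * B * Cᵀ)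
  | Sum.inr (Sum.inr (Sum.inl e)) => LinearMap.proj e ∘ₗ Matrix.mulVecLin (B * Cᵀ)
  | Sum.inr (Sum.inr (Sum.inr e)) => LinearMap.proj e ∘ₗ Matrix.mulVecLin (B * Cᵀ)

/-- The limit appearing in each inequality constraint, as a functional of `ξ`. -/
def limJ {NG E : ℕ} : JT NG E → (XiT NG E →ₗ[ℝ] ℝ)
  | Sum.inl i => ⟨⟨fun ξ => ξ.1 i, fun _ _ => rfl⟩, fun _ _ => rfl⟩
  | Sum.inr (Sum.inl i) => ⟨⟨fun ξ => ξ.2.1 i, fun _ _ => rfl⟩, fun _ _ => rfl⟩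
  | Sum.inr (Sum.inr (Sum.inl e)) => ⟨⟨fun ξ => ξ.2.2.1 e, fun _ _ => rfl⟩, fun _ _ => rfl⟩
  | Sum.inr (Sum.inr (Sum.inr e)) => ⟨⟨fun ξ => ξ.2.2.2 e, fun _ _ => rfl⟩, fun _ _ => rfl⟩

/-- Sign of each inequality constraint: `+1` for upper, `-1` for lower limits. -/
def sgnJ {NG E : ℕ} : JT NG E → ℝ
  | Sum.inl _ => 1
  | Sum.inr (Sum.inl _) => -1
  | Sum.inr (Sum.inr (Sum.inl _)) => 1
  | Sum.inr (Sum.inr (Sum.inr _)) => -1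

/-- The load rows. -/
def rowL {NG NL E : ℕ} (C : Matrix (Fin (NG + NL)) (Fin E) ℝ)
    (B : Matrix (Fin E) (Fin E) ℝ) (k : Fin NL) : (Fin (NG + NL) → ℝ) →ₗ[ℝ] ℝ :=
  LinearMap.proj (Fin.natAdd NG k) ∘ₗ Matrix.mulVecLin (C * B * Cᵀ)

/-- The full family: reference-angle row, load rows, and the rows in `S`. -/
def rowAll {NG NL E : ℕ} (C : Matrix (Fin (NG + NL)) (Fin E) ℝ)
    (B : Matrix (Fin E) (Fin E) ℝ) (h0 : 0 < NG + NL) (S : Finset (JT NG E)) :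
    (Unit ⊕ Fin NL ⊕ ↥S) → ((Fin (NG + NL) → ℝ) →ₗ[ℝ] ℝ)
  | Sum.inl _ => LinearMap.proj ⟨0, h0⟩
  | Sum.inr (Sum.inl k) => rowL C B k
  | Sum.inr (Sum.inr j) => rowJ C B j.1

section applyLemmas
variable {NG NL E : ℕ} (C : Matrix (Fin (NG + NL)) (Fin E) ℝ)
    (B : Matrix (Fin E) (Fin E) ℝ) (x : Fin (NG + NL) → ℝ)
lemma rowJ1 (i : Fin NG) : rowJ C B (Sum.inl i) x = ((C * B * Cᵀ) *ᵥ x) (Fin.castAdd NL i) := rfl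
lemma rowJ2 (i : Fin NG) :
    rowJ C B (Sum.inr (Sum.inl i)) x = ((C * B * Cᵀ) *ᵥ x) (Fin.castAdd NL i) := rfl
lemma rowJ3 (e : Fin E) :
    rowJ C B (Sum.inr (Sum.inr (Sum.inl e))) x = ((B * Cᵀ) *ᵥ x) e := rfl
lemma rowJ4 (e : Fin E) :
    rowJ C B (Sum.inr (Sum.inr (Sum.inr e))) x = ((B * Cᵀ) *ᵥ x) e := rfl
lemma rowL1 (k : Fin NL) : rowL C B k x = ((C * B * Cᵀ) *ᵥ x) (Fin.natAdd NG k) := rfl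
end applyLemmas

lemma sgnJ_ne {NG E : ℕ} (j : JT NG E) : sgnJ j ≠ 0 := by
  rcases j with i | i | e | e <;> simp [sgnJ]

lemma feasible_iff {NG NL E : ℕ} (h0 : 0 < NG + NL) (C : Matrix (Fin (NG + NL)) (Fin E) ℝ)
    (B : Matrix (Fin E) (Fin E) ℝ) (ξ : XiT NG E) (sl : Fin NL → ℝ)
    (sg : Fin NG → ℝ) (θ : Fin (NG + NL) → ℝ) :
    Feasible C B ξ sl sg θ ↔ θ ⟨0, h0⟩ = 0 ∧
      (∀ i, ((C * B * Cᵀ) *ᵥ θ) (Fin.castAdd NL i) = sg i) ∧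
      (∀ k, rowL C B k θ = - sl k) ∧
      ∀ j, 0 ≤ sgnJ j * (limJ j ξ - rowJ C B j θ) := by
  unfold Feasible
  constructor
  · rintro ⟨h1, h2, h3, h4⟩
    have hg : ∀ i, ((C * B * Cᵀ) *ᵥ θ) (Fin.castAdd NL i) = sg i := fun i => by
      rw [h2, Fin.append_left]
    refine ⟨h1 h0, hg, fun k => ?_, ?_⟩
    · simp [rowL1, h2]
    · rintro (i | i | e | e)
      · simpa [sgnJ, limJ, rowJ1, rowJ2, rowJ3, rowJ4, hg] using (h3 i).2
      · simpa [sgnJ, limJ, rowJ1, rowJ2, rowJ3, rowJ4, hg] using (h3 i).1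
      · simpa [sgnJ, limJ, rowJ1, rowJ2, rowJ3, rowJ4] using (h4 e).2
      · simpa [sgnJ, limJ, rowJ1, rowJ2, rowJ3, rowJ4] using (h4 e).1
  · rintro ⟨h1, hg, hl, hj⟩
    refine ⟨fun _ => h1, ?_, fun i => ⟨?_, ?_⟩, fun e => ⟨?_, ?_⟩⟩
    · funext i
      refine Fin.addCases (fun i => ?_) (fun k => ?_) i
      · rw [hg, Fin.append_left]
      · rw [Fin.append_right]; exact hl k
    · simpa [sgnJ, limJ, rowJ1, rowJ2, rowJ3, rowJ4, hg] using hj (Sum.inr (Sum.inl i))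
    · simpa [sgnJ, limJ, rowJ1, rowJ2, rowJ3, rowJ4, hg] using hj (Sum.inl i)
    · simpa [sgnJ, limJ, rowJ1, rowJ2, rowJ3, rowJ4] using hj (Sum.inr (Sum.inr (Sum.inr e)))
    · simpa [sgnJ, limJ, rowJ1, rowJ2, rowJ3, rowJ4] using hj (Sum.inr (Sum.inr (Sum.inl e)))

open Classical in
/-- The binding set as a finset. -/
def bindSet {NG NL E : ℕ} (C : Matrix (Fin (NG + NL)) (Fin E) ℝ)
    (B : Matrix (Fin E) (Fin E) ℝ) (ξ : XiT NG E) (θ : Fin (NG + NL) → ℝ) :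
    Finset (JT NG E) := Finset.univ.filter fun j => rowJ C B j θ = limJ j ξ

lemma card_bindSet {NG NL E : ℕ} (C : Matrix (Fin (NG + NL)) (Fin E) ℝ)
    (B : Matrix (Fin E) (Fin E) ℝ) (ξ : XiT NG E) (sg : Fin NG → ℝ) (θ : Fin (NG + NL) → ℝ)
    (hg : ∀ i, ((C * B * Cᵀ) *ᵥ θ) (Fin.castAdd NL i) = sg i) :
    bindingCount C B ξ sg θ = (bindSet C B ξ θ).card := by
  classical
  unfold bindingCount bindSet
  simp only [Finset.card_filter, Fintype.sum_sum_type, Set.ncard_eq_toFinset_card',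
    Set.toFinset_ofPred]
  simp [rowJ1, rowJ2, rowJ3, rowJ4, limJ, hg, add_assoc]
  simp only [Finset.card_filter]
  congr!

lemma exists_annihilator {NG NL E : ℕ} (C : Matrix (Fin (NG + NL)) (Fin E) ℝ)
    (B : Matrix (Fin E) (Fin E) ℝ) (h0 : 0 < NG + NL) (S : Finset (JT NG E))
    (hS : NG ≤ S.card) :
    ∃ (u : Fin NL → ℝ) (w : JT NG E → ℝ), (u ≠ 0 ∨ w ≠ 0) ∧ (∀ j, j ∉ S → w j = 0) ∧
      ∀ θ : Fin (NG + NL) → ℝ, θ ⟨0, h0⟩ = 0 →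
        ∑ k, u k * rowL C B k θ + ∑ j, w j * rowJ C B j θ = 0 := by
  classical
  have hdep : ¬ LinearIndependent ℝ (rowAll C B h0 S) := by
    intro h
    have := h.fintype_card_le_finrank
    rw [show Module.finrank ℝ ((Fin (NG + NL) → ℝ) →ₗ[ℝ] ℝ) = NG + NL by
      rw [Module.finrank_linearMap]; simp] at this
    simp at this
    omega
  obtain ⟨g, hg, i, hi⟩ := Fintype.not_linearIndependent_iff.1 hdep
  simp only [Fintype.sum_sum_type, rowAll] at hg
  have happ : ∀ θ : Fin (NG + NL) → ℝ, g (Sum.inl ()) * θ ⟨0, h0⟩ +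
      (∑ k, g (Sum.inr (Sum.inl k)) * rowL C B k θ +
       ∑ j : S, g (Sum.inr (Sum.inr j)) * rowJ C B j.1 θ) = 0 := by
    intro θ
    have := LinearMap.congr_fun hg θ
    simpa [LinearMap.sum_apply] using this
  refine ⟨fun k => g (Sum.inr (Sum.inl k)),
    fun j => if h : j ∈ S then g (Sum.inr (Sum.inr ⟨j, h⟩)) else 0, ?_, ?_, ?_⟩
  · by_contra hcon
    push Not at hcon
    obtain ⟨hu, hw⟩ := hcon
    have hu' : ∀ k, g (Sum.inr (Sum.inl k)) = 0 := fun k => congrFun hu k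
    have hw' : ∀ j : S, g (Sum.inr (Sum.inr j)) = 0 := fun j => by
      have := congrFun hw j.1
      simpa using this
    have h1 := happ (fun _ => 1)
    simp [hu', hw'] at h1
    rcases i with _ | k | j
    · exact hi h1
    · exact hi (hu' k)
    · exact hi (hw' j)
  · intro j hj; simp [hj]
  · intro θ hθ
    have h1 := happ θ
    rw [hθ, mul_zero, zero_add] at h1
    refine Eq.trans ?_ h1
    refine congrArg₂ (· + ·) rfl ?_
    rw [← Finset.sum_subset (Finset.subset_univ S), ← Finset.sum_coe_sort S]
    · refine Finset.sum_congr rfl fun j _ => ?_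
      simp
    · intro j _ hj; simp [hj]

lemma exists_hyperplane {NL : ℕ} (u : Fin NL → ℝ) (hu : u ≠ 0) (c : ℝ) :
    ∃ P : AffineSubspace ℝ (Fin NL → ℝ), Module.finrank ℝ P.direction < NL ∧
      ∀ x : Fin NL → ℝ, ∑ k, u k * x k = c → x ∈ P := by
  classical
  let φ : (Fin NL → ℝ) →ₗ[ℝ] ℝ := ∑ k, u k • LinearMap.proj k
  have hφ : ∀ x, φ x = ∑ k, u k * x k := fun x => by simp [φ, LinearMap.sum_apply]
  have hpos : φ u ≠ 0 := by
    rw [hφ]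
    intro h
    apply hu
    rw [Finset.sum_eq_zero_iff_of_nonneg (fun k _ => mul_self_nonneg _)] at h
    funext k
    simpa using h k (Finset.mem_univ k)
  refine ⟨AffineSubspace.mk' ((c / φ u) • u) (LinearMap.ker φ), ?_, ?_⟩
  · rw [AffineSubspace.direction_mk']
    have : LinearMap.ker φ < ⊤ := by
      rw [lt_top_iff_ne_top]
      intro h
      exact hpos (by rw [← LinearMap.mem_ker, h]; trivial)
    simpa using Submodule.finrank_lt this.ne
  · intro x hx
    rw [AffineSubspace.mem_mk', LinearMap.mem_ker, vsub_eq_sub, map_sub, map_smul, hφ x, hx,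
      smul_eq_mul, div_mul_cancel₀ _ hpos, sub_self]

lemma binding_ge {NG NL E : ℕ} (h0 : 0 < NG + NL) (C : Matrix (Fin (NG + NL)) (Fin E) ℝ)
    (B : Matrix (Fin E) (Fin E) ℝ) (f : Fin NG → ℝ) (ξ : XiT NG E) (sl : Fin NL → ℝ)
    (sg : Fin NG → ℝ) (θ : Fin (NG + NL) → ℝ) (hopt : IsOptimal C B f ξ sl sg θ)
    (huniq : ∀ sg' θ', IsOptimal C B f ξ sl sg' θ' → θ' = θ) :
    NG - 1 ≤ (bindSet C B ξ θ).card := by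
  classical
  by_contra hlt
  push Not at hlt
  set S := bindSet C B ξ θ with hS
  obtain ⟨hfeas, hmin⟩ := hopt
  obtain ⟨f1, f2, f3, f4⟩ := (feasible_iff h0 C B ξ sl sg θ).1 hfeas
  have hker : LinearMap.ker (LinearMap.pi (rowAll C B h0 S)) ≠ ⊥ := by
    apply LinearMap.ker_ne_bot_of_finrank_lt
    simp
    omega
  obtain ⟨d, hd, hd0⟩ := (Submodule.ne_bot_iff _).1 hker
  rw [LinearMap.mem_ker] at hd
  have d1 : d ⟨0, h0⟩ = 0 := congrFun hd (Sum.inl ())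
  have d2 : ∀ k, rowL C B k d = 0 := fun k => congrFun hd (Sum.inr (Sum.inl k))
  have d3 : ∀ j ∈ S, rowJ C B j d = 0 := fun j hj => congrFun hd (Sum.inr (Sum.inr ⟨j, hj⟩))
  let G : (Fin (NG + NL) → ℝ) → (Fin NG → ℝ) := fun x i => ((C * B * Cᵀ) *ᵥ x) (Fin.castAdd NL i)
  have hev : ∀ᶠ t : ℝ in nhds 0, ∀ j, 0 ≤ sgnJ j * (limJ j ξ - rowJ C B j (θ + t • d)) := by
    rw [Filter.eventually_all]
    intro j
    by_cases hj : j ∈ S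
    · refine Filter.Eventually.of_forall fun t => ?_
      simpa [d3 j hj] using f4 j
    · have hne : rowJ C B j θ ≠ limJ j ξ := by
        intro h; apply hj; simp [hS, bindSet, h]
      have hpos : 0 < sgnJ j * (limJ j ξ - rowJ C B j θ) :=
        lt_of_le_of_ne (f4 j) (Ne.symm (mul_ne_zero (sgnJ_ne j) (sub_ne_zero.2 (Ne.symm hne))))
      have hcont : Continuous fun t : ℝ =>
          sgnJ j * (limJ j ξ - (rowJ C B j θ + t * rowJ C B j d)) := by fun_prop
      have := (hcont.tendsto 0).eventually (lt_mem_nhds (a := 0) (by simpa using hpos))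
      filter_upwards [this] with t ht
      simpa using ht.le
  have hfe : ∀ᶠ t : ℝ in nhds 0, Feasible C B ξ sl (G (θ + t • d)) (θ + t • d) := by
    filter_upwards [hev] with t ht
    rw [feasible_iff h0]
    refine ⟨by simp [f1, d1], fun i => rfl, fun k => by simp [d2, f3], ht⟩
  have hfe2 : ∀ᶠ t : ℝ in nhds 0, Feasible C B ξ sl (G (θ + (-t) • d)) (θ + (-t) • d) := by
    have : Filter.Tendsto (fun t : ℝ => -t) (nhds 0) (nhds 0) := by
      simpa using (continuous_neg (G := ℝ)).tendsto 0
    exact this.eventually hfe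
  have hpos : ∃ t : ℝ, 0 < t ∧ Feasible C B ξ sl (G (θ + t • d)) (θ + t • d) ∧
      Feasible C B ξ sl (G (θ + (-t) • d)) (θ + (-t) • d) := by
    have := (hfe.and hfe2).filter_mono (nhdsWithin_le_nhds (s := Set.Ioi 0))
    obtain ⟨t, ht, ht2⟩ := (this.and self_mem_nhdsWithin).exists
    exact ⟨t, ht2, ht⟩
  obtain ⟨t, ht, hp, hm⟩ := hpos
  have hGlin : ∀ s : ℝ, G (θ + s • d) = sg + s • G d := by
    intro s; funext i
    simp [G, Matrix.mulVec_add, Matrix.mulVec_smul, f2]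
  have key : ∀ s : ℝ, s ≠ 0 → Feasible C B ξ sl (G (θ + s • d)) (θ + s • d) →
      f ⬝ᵥ G (θ + s • d) ≤ f ⬝ᵥ sg → False := by
    intro s hs hfs hle
    have := huniq _ _ ⟨hfs, fun sg' θ' h => hle.trans (hmin sg' θ' h)⟩
    have : s • d = 0 := by simpa using this
    rcases smul_eq_zero.1 this with h | h
    · exact hs h
    · exact hd0 h
  rcases le_total (f ⬝ᵥ G d) 0 with hc | hc
  · refine key t ht.ne' hp ?_
    rw [hGlin, dotProduct_add, dotProduct_smul, smul_eq_mul]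
    nlinarith
  · refine key (-t) (neg_lt_zero.2 ht).ne hm ?_
    rw [hGlin, dotProduct_add, dotProduct_smul, smul_eq_mul]
    nlinarith

lemma lap_solve {NG NL E : ℕ} (h0 : 0 < NG + NL)
    (C : Matrix (Fin (NG + NL)) (Fin E) ℝ) (B : Matrix (Fin E) (Fin E) ℝ)
    (hConn : ConnectedIncidence C) (hB : PosDiag B)
    (v : Fin (NG + NL) → ℝ) (hv : ∑ i, v i = 0) :
    ∃ θ : Fin (NG + NL) → ℝ, θ ⟨0, h0⟩ = 0 ∧ (C * B * Cᵀ) *ᵥ θ = v := by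
  classical
  set L := C * B * Cᵀ with hL
  have hone : Cᵀ *ᵥ (fun _ => (1:ℝ)) = 0 := (hConn _).2 ⟨1, rfl⟩
  have hquad : ∀ x, x ⬝ᵥ (L *ᵥ x) = ∑ e, B e e * (Cᵀ *ᵥ x) e ^ 2 := by
    intro x
    have hBd : ∀ y : Fin E → ℝ, ∀ e, (B *ᵥ y) e = B e e * y e := by
      intro y e
      simp only [Matrix.mulVec, dotProduct]
      rw [Finset.sum_eq_single e]
      · intro b _ hb; rw [hB.2 e b (Ne.symm hb), zero_mul]
      · simp
    rw [hL, ← Matrix.mulVec_mulVec, ← Matrix.mulVec_mulVec, Matrix.dotProduct_mulVec,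
      ← Matrix.mulVec_transpose]
    simp only [dotProduct, hBd]
    refine Finset.sum_congr rfl fun e _ => by ring
  have hsum : ∀ x, ∑ i, (L *ᵥ x) i = 0 := by
    intro x
    have : (fun _ => (1:ℝ)) ⬝ᵥ (L *ᵥ x) = 0 := by
      rw [hL, ← Matrix.mulVec_mulVec, ← Matrix.mulVec_mulVec, Matrix.dotProduct_mulVec,
        ← Matrix.mulVec_transpose, hone, zero_dotProduct]
    simpa [dotProduct] using this
  let T : (Fin (NG + NL) → ℝ) →ₗ[ℝ] (Fin (NG + NL) → ℝ) :=
    Matrix.mulVecLin (L + Matrix.of fun _ _ => 1)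
  have hT : ∀ x i, T x i = (L *ᵥ x) i + ∑ k, x k := by
    intro x i
    simp [T, Matrix.add_mulVec, Matrix.mulVec, dotProduct]
  have hinj : Function.Injective T := by
    rw [← LinearMap.ker_eq_bot, LinearMap.ker_eq_bot']
    intro x hx
    have h1 : ∀ i, (L *ᵥ x) i + ∑ k, x k = 0 := fun i => by rw [← hT, hx]; rfl
    have hs : ∑ k, x k = 0 := by
      have := Finset.sum_congr rfl (fun i (_ : i ∈ Finset.univ) => h1 i)
      rw [Finset.sum_add_distrib, hsum] at this
      simp at this
      rcases this with h | h
      · exfalso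
        have : ((NG + NL : ℕ) : ℝ) = 0 := by push_cast; exact h
        exact h0.ne' (by exact_mod_cast this)
      · exact h
    have h2 : L *ᵥ x = 0 := by
      funext i; have := h1 i; rw [hs, add_zero] at this; exact this
    have h3 := hquad x
    rw [h2, dotProduct_zero] at h3
    have h4 := (Finset.sum_eq_zero_iff_of_nonneg
      (fun e _ => mul_nonneg (hB.1 e).le (sq_nonneg _))).1 h3.symm
    have h5 : Cᵀ *ᵥ x = 0 := by
      funext e
      have := h4 e (Finset.mem_univ e)
      rcases mul_eq_zero.1 this with h | h
      · exact absurd h (hB.1 e).ne'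
      · exact pow_eq_zero_iff (two_ne_zero) |>.1 h
    obtain ⟨c, rfl⟩ := (hConn x).1 h5
    simp at hs
    rcases hs with h | h
    · exfalso
      have : ((NG + NL : ℕ) : ℝ) = 0 := by push_cast; exact h
      exact h0.ne' (by exact_mod_cast this)
    · funext i; exact h
  have hsurj := LinearMap.injective_iff_surjective.1 hinj
  obtain ⟨x, hx⟩ := hsurj v
  have h1 : ∀ i, (L *ᵥ x) i + ∑ k, x k = v i := fun i => by rw [← hT, hx]
  have hs : ∑ k, x k = 0 := by
    have := Finset.sum_congr rfl (fun i (_ : i ∈ Finset.univ) => h1 i)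
    rw [Finset.sum_add_distrib, hsum, hv] at this
    simp at this
    rcases this with h | h
    · exfalso
      have : ((NG + NL : ℕ) : ℝ) = 0 := by push_cast; exact h
      exact h0.ne' (by exact_mod_cast this)
    · exact h
  refine ⟨x - fun _ => x ⟨0, h0⟩, by simp, ?_⟩
  have hc : L *ᵥ (fun _ => x ⟨0, h0⟩) = 0 := by
    rw [hL, ← Matrix.mulVec_mulVec, (hConn _).2 ⟨_, rfl⟩, Matrix.mulVec_zero]
  rw [Matrix.mulVec_sub, hc, sub_zero]
  funext i
  rw [← h1 i, hs, add_zero]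

/-- Limits that admit a strictly feasible point. -/
def strictXi {NG NL E : ℕ} (C : Matrix (Fin (NG + NL)) (Fin E) ℝ)
    (B : Matrix (Fin E) (Fin E) ℝ) (h0 : 0 < NG + NL) : Set (XiT NG E) :=
  ⋃ θ ∈ {θ : Fin (NG + NL) → ℝ | θ ⟨0, h0⟩ = 0 ∧ ∀ k, rowL C B k θ < 0},
    {ξ | (∀ i, 0 < ξ.2.1 i) ∧ ∀ j, 0 < sgnJ j * (limJ j ξ - rowJ C B j θ)}

lemma strictXi_open {NG NL E : ℕ} (C : Matrix (Fin (NG + NL)) (Fin E) ℝ)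
    (B : Matrix (Fin E) (Fin E) ℝ) (h0 : 0 < NG + NL) : IsOpen (strictXi C B h0) := by
  refine isOpen_biUnion fun θ _ => ?_
  simp only [Set.ofPred_and, Set.ofPred_forall]
  refine IsOpen.inter (isOpen_iInter_of_finite fun i => ?_) (isOpen_iInter_of_finite fun j => ?_)
  · exact isOpen_lt continuous_const (by fun_prop)
  · have : Continuous (limJ j : XiT NG E →ₗ[ℝ] ℝ) := LinearMap.continuous_of_finiteDimensional _
    exact isOpen_lt continuous_const (by fun_prop)

lemma strictXi_subset {NG NL E : ℕ} (C : Matrix (Fin (NG + NL)) (Fin E) ℝ)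
    (B : Matrix (Fin E) (Fin E) ℝ) (h0 : 0 < NG + NL) : strictXi C B h0 ⊆ OmegaXi C B := by
  intro ξ hξ
  simp only [strictXi, Set.mem_iUnion, Set.mem_ofPred_eq, exists_prop] at hξ
  obtain ⟨θ, ⟨h1, h2⟩, h3, h4⟩ := hξ
  refine ⟨fun i => (h3 i).le, fun i => ?_, fun e => ?_, fun k => - rowL C B k θ,
    fun k => neg_pos.2 (h2 k), fun i => ((C * B * Cᵀ) *ᵥ θ) (Fin.castAdd NL i), θ, ?_⟩
  · have a := h4 (Sum.inl i)
    have b := h4 (Sum.inr (Sum.inl i))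
    simp [sgnJ, limJ, rowJ1, rowJ2, rowJ3, rowJ4] at a b
    linarith
  · have a := h4 (Sum.inr (Sum.inr (Sum.inl e)))
    have b := h4 (Sum.inr (Sum.inr (Sum.inr e)))
    simp [sgnJ, limJ, rowJ1, rowJ2, rowJ3, rowJ4] at a b
    linarith
  · rw [feasible_iff h0]
    exact ⟨h1, fun _ => rfl, fun k => by simp, fun j => (h4 j).le⟩

lemma omegaXi_subset {NG NL E : ℕ} (hNL : 0 < NL) (C : Matrix (Fin (NG + NL)) (Fin E) ℝ)
    (B : Matrix (Fin E) (Fin E) ℝ) (h0 : 0 < NG + NL)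
    (hConn : ConnectedIncidence C) (hB : PosDiag B) :
    OmegaXi C B ⊆ closure (strictXi C B h0) := by
  intro ξ hξ
  obtain ⟨x1, x2, x3, sl, hsl, sg, θ, hfe⟩ := hξ
  obtain ⟨f1, f2, f3, f4⟩ := (feasible_iff h0 C B ξ sl sg θ).1 hfe
  have hNL' : (NL : ℝ) ≠ 0 := by exact_mod_cast hNL.ne'
  obtain ⟨η, e1, e2⟩ := lap_solve h0 C B hConn hB
    (Fin.append (fun _ => 1) (fun _ => -((NG : ℝ) / NL))) (by
      rw [Fin.sum_univ_add]
      simp [Fin.append_left, Fin.append_right]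
      field_simp; ring)
  let q : Fin E → ℝ := (B * Cᵀ) *ᵥ η
  let d : XiT NG E := (fun _ => 2, fun _ => 1 / 2, fun e => |q e| + 1, fun e => -(|q e| + 1))
  have hgen : ∀ i : Fin NG, ((C * B * Cᵀ) *ᵥ η) (Fin.castAdd NL i) = 1 := fun i => by
    rw [e2, Fin.append_left]
  have hload : ∀ k : Fin NL, rowL C B k η = -((NG : ℝ) / NL) := fun k => by
    simp [rowL1, e2]
  have hdj : ∀ j, 0 < sgnJ j * (limJ j d - rowJ C B j η) := by
    rintro (i | i | e | e)
    · simp [sgnJ, limJ, rowJ1, rowJ2, rowJ3, rowJ4, hgen, d]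
    · simp [sgnJ, limJ, rowJ1, rowJ2, rowJ3, rowJ4, hgen, d]; norm_num
    · simp [sgnJ, limJ, rowJ1, rowJ2, rowJ3, rowJ4, d, q]; linarith [le_abs_self (((B * Cᵀ) *ᵥ η) e)]
    · simp [sgnJ, limJ, rowJ1, rowJ2, rowJ3, rowJ4, d, q]; linarith [neg_abs_le (((B * Cᵀ) *ᵥ η) e)]
  have hlim : Filter.Tendsto (fun t : ℝ => ξ + t • d) (nhdsWithin 0 (Set.Ioi 0)) (nhds ξ) := by
    have hc : Continuous fun t : ℝ => ξ + t • d := by fun_prop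
    have := (hc.tendsto 0).mono_left (nhdsWithin_le_nhds (s := Set.Ioi 0))
    simpa using this
  refine mem_closure_of_tendsto hlim ?_
  filter_upwards [self_mem_nhdsWithin] with t ht
  have ht : 0 < t := ht
  simp only [strictXi, Set.mem_iUnion, Set.mem_ofPred_eq, exists_prop]
  refine ⟨θ + t • η, ⟨by simp [f1, e1], fun k => ?_⟩, fun i => ?_, fun j => ?_⟩
  · have : 0 ≤ t * ((NG : ℝ) / NL) := by positivity
    simp only [map_add, map_smul, f3, hload, smul_eq_mul]
    have := hsl k
    linarith
  · have := x1 i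
    simp [d]
    linarith
  · have a := f4 j
    have b := mul_pos ht (hdj j)
    simp only [map_add, map_smul, smul_eq_mul]
    nlinarith

lemma dense_limit {NG E : ℕ} (w : JT NG E → ℝ) (hw : w ≠ 0) :
    IsOpen {ξ : XiT NG E | ∑ j, w j * limJ j ξ ≠ 0} ∧
    Dense {ξ : XiT NG E | ∑ j, w j * limJ j ξ ≠ 0} := by
  let ψ : XiT NG E →ₗ[ℝ] ℝ := ∑ j, w j • limJ j
  have hψ : ∀ ξ, ψ ξ = ∑ j, w j * limJ j ξ := fun ξ => by simp only [ψ, LinearMap.sum_apply, LinearMap.smul_apply, smul_eq_mul]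
  simp only [← hψ]
  have hc : Continuous ψ := LinearMap.continuous_of_finiteDimensional _
  refine ⟨isOpen_ne_fun hc continuous_const, ?_⟩
  have : {ξ | ψ ξ ≠ 0} = ((LinearMap.ker ψ : Submodule ℝ (XiT NG E)) : Set (XiT NG E))ᶜ := by
    ext ξ; simp
  rw [this, ← interior_eq_empty_iff_dense_compl]
  by_contra hne
  have htop := Submodule.eq_top_of_nonempty_interior' _ (Set.nonempty_iff_ne_empty.2 hne)
  let ζ : XiT NG E := (fun i => w (Sum.inl i), fun i => w (Sum.inr (Sum.inl i)),
    fun e => w (Sum.inr (Sum.inr (Sum.inl e))), fun e => w (Sum.inr (Sum.inr (Sum.inr e))))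
  have hζ : ∀ j, limJ j ζ = w j := by rintro (i | i | e | e) <;> rfl
  have hz : ψ ζ = 0 := by rw [← LinearMap.mem_ker, htop]; trivial
  rw [hψ] at hz
  simp only [hζ] at hz
  rw [Finset.sum_eq_zero_iff_of_nonneg (fun k _ => mul_self_nonneg _)] at hz
  exact hw (funext fun j => by simpa using hz j (Finset.mem_univ j))

theorem bad_loads_covered_by_affine_subspaces {NG NL E : ℕ} (hNG : 0 < NG) (hNL : 0 < NL) (hE : 0 < E)
    (C : Matrix (Fin (NG + NL)) (Fin E) ℝ) (B : Matrix (Fin E) (Fin E) ℝ)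
    (hInc : IsIncidence C) (hConn : ConnectedIncidence C) (hB : PosDiag B) :
    ∀ f ∈ OmegaF C B, ∃ D ⊆ OmegaXi C B, OmegaXi C B ⊆ closure D ∧
      ∀ ξ ∈ D, ∃ (k : ℕ) (P : Fin k → AffineSubspace ℝ (Fin NL → ℝ)),
        (∀ m, Module.finrank ℝ (P m).direction < NL) ∧
        OmegaSl C B ξ \ TOmegaSl C B f ξ ⊆ ⋃ m, (P m : Set (Fin NL → ℝ)) := by
  classical
  intro f hf
  have h0 : 0 < NG + NL := by omega
  have hann : ∀ S : Finset (JT NG E), ∃ (u : Fin NL → ℝ) (w : JT NG E → ℝ), NG ≤ S.card →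
      (u ≠ 0 ∨ w ≠ 0) ∧ (∀ j, j ∉ S → w j = 0) ∧
      ∀ θ : Fin (NG + NL) → ℝ, θ ⟨0, h0⟩ = 0 →
        ∑ k, u k * rowL C B k θ + ∑ j, w j * rowJ C B j θ = 0 := by
    intro S
    by_cases hS : NG ≤ S.card
    · obtain ⟨u, w, h⟩ := exists_annihilator C B h0 S hS
      exact ⟨u, w, fun _ => h⟩
    · exact ⟨0, 0, fun h => absurd h hS⟩
  choose u w hann using hann
  let Gd : Set (XiT NG E) := ⋂ S : {S : Finset (JT NG E) // w S ≠ 0},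
    {ξ | ∑ j, w S.1 j * limJ j ξ ≠ 0}
  have hGd : Dense Gd := dense_iInter_of_isOpen (fun S => (dense_limit _ S.2).1)
    (fun S => (dense_limit _ S.2).2)
  refine ⟨strictXi C B h0 ∩ Gd, fun ξ h => strictXi_subset C B h0 h.1, ?_, ?_⟩
  · refine (omegaXi_subset hNL C B h0 hConn hB).trans ?_
    exact closure_minimal (hGd.open_subset_closure_inter (strictXi_open C B h0)) isClosed_closure
  · rintro ξ ⟨hξ1, hξ2⟩
    have hξ := strictXi_subset C B h0 hξ1
    have hP : ∀ S : Finset (JT NG E), ∃ P : AffineSubspace ℝ (Fin NL → ℝ),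
        Module.finrank ℝ P.direction < NL ∧
        (u S ≠ 0 → ∀ x : Fin NL → ℝ, ∑ k, u S k * x k = ∑ j, w S j * limJ j ξ → x ∈ P) := by
      intro S
      by_cases hu : u S = 0
      · exact ⟨⊥, by rw [AffineSubspace.direction_bot, finrank_bot]; exact hNL, fun h => absurd hu h⟩
      · obtain ⟨P, h1, h2⟩ := exists_hyperplane (u S) hu (∑ j, w S j * limJ j ξ)
        exact ⟨P, h1, fun _ => h2⟩
    choose P hP1 hP2 using hP
    refine ⟨Fintype.card (Finset (JT NG E)), fun m => P ((Fintype.equivFin _).symm m),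
      fun m => hP1 _, ?_⟩
    rintro sl ⟨hsl, hbad⟩
    have hbad' : ∃ sg θ, IsOptimal C B f ξ sl sg θ ∧ bindingCount C B ξ sg θ ≠ NG - 1 := by
      by_contra hcon
      push Not at hcon
      exact hbad ⟨hsl, hcon⟩
    obtain ⟨sg, θ, hopt, hcount⟩ := hbad'
    obtain ⟨f1, f2, f3, f4⟩ := (feasible_iff h0 C B ξ sl sg θ).1 hopt.1
    rw [card_bindSet C B ξ sg θ f2] at hcount
    have hge := binding_ge h0 C B f ξ sl sg θ hopt (fun sg' θ' h' =>
      congrArg Prod.snd ((hf.2 ξ hξ sl hsl).1.unique (y₁ := (sg', θ')) (y₂ := (sg, θ)) h' hopt))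
    set S := bindSet C B ξ θ with hSdef
    have hS : NG ≤ S.card := by omega
    obtain ⟨a1, a2, a3⟩ := hann S hS
    have hrel : ∑ k, u S k * sl k = ∑ j, w S j * limJ j ξ := by
      have h1 := a3 θ f1
      have h2 : ∑ j, w S j * rowJ C B j θ = ∑ j, w S j * limJ j ξ := by
        refine Finset.sum_congr rfl fun j _ => ?_
        by_cases hj : j ∈ S
        · rw [(Finset.mem_filter.1 hj).2]
        · rw [a2 j hj, zero_mul, zero_mul]
      simp only [f3, mul_neg, Finset.sum_neg_distrib] at h1
      rw [h2] at h1
      linarith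
    have hu : u S ≠ 0 := by
      intro hu
      have hw : w S ≠ 0 := a1.resolve_left (fun h => h hu)
      have := Set.mem_iInter.1 hξ2 ⟨S, hw⟩
      apply this
      show ∑ j, w S j * limJ j ξ = 0
      rw [← hrel, hu]; simp
    refine Set.mem_iUnion.2 ⟨Fintype.equivFin _ S, ?_⟩
    simpa using hP2 S hu sl hrel

end
end

section
/- For every f ∈ Ω_f there exists a subset D ⊆ Ω_ξ, dense in Ω_ξ, such that for every ξ ∈ D and every s^l ∈ ~Ω_sl(ξ, f), the N_G − 1 binding inequality constraints at the unique optimal solution are independent of the equality constraints: the gradient vectors of the N+1 equality constraints together with the gradient vectors of the N_G − 1 binding inequality constraints are linearly independent in ℝ^{N_G+N}. -/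
open Matrix

noncomputable section

/-- The number of binding indices is the binding count. -/
theorem card_bindingIdx {NG NL E : ℕ} (C : Matrix (Fin (NG + NL)) (Fin E) ℝ)
    (B : Matrix (Fin E) (Fin E) ℝ) (ξ : XiT NG E) (sg : Fin NG → ℝ)
    (θ : Fin (NG + NL) → ℝ) :
    Nat.card (BindingIdx C B ξ sg θ) = bindingCount C B ξ sg θ := by
  classical
  have e1 := (Equiv.subtypeSum (p := fun c => c ∈ BindingIdx C B ξ sg θ))
  have e2 := (Equiv.subtypeSum (p := fun c => Sum.inr c ∈ BindingIdx C B ξ sg θ))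
  have e3 := (Equiv.subtypeSum (p := fun c => Sum.inr (Sum.inr c) ∈ BindingIdx C B ξ sg θ))
  have h1 := Nat.card_congr e1
  have h2 := Nat.card_congr e2
  have h3 := Nat.card_congr e3
  rw [Nat.card_sum] at h1 h2 h3
  have : Nat.card (BindingIdx C B ξ sg θ) = _ := h1
  rw [this, h2, h3, bindingCount, add_assoc, add_assoc]
  rfl

/-- Moving a little along a direction annihilated by the equality constraints and the
binding inequality constraints preserves feasibility. -/
theorem feasible_perturb {NG NL E : ℕ} (C : Matrix (Fin (NG + NL)) (Fin E) ℝ)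
    (B : Matrix (Fin E) (Fin E) ℝ) (ξ : XiT NG E) (sl : Fin NL → ℝ)
    (sg u : Fin NG → ℝ) (θ w : Fin (NG + NL) → ℝ) (hF : Feasible C B ξ sl sg θ)
    (h0 : ∀ h : 0 < NG + NL, w ⟨0, h⟩ = 0)
    (hL : (C * B * Cᵀ) *ᵥ w = Fin.append u (fun _ => 0))
    (hu1 : ∀ i, sg i = ξ.1 i → u i = 0) (hu2 : ∀ i, sg i = ξ.2.1 i → u i = 0)
    (hw1 : ∀ e, ((B * Cᵀ) *ᵥ θ) e = ξ.2.2.1 e → ((B * Cᵀ) *ᵥ w) e = 0)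
    (hw2 : ∀ e, ((B * Cᵀ) *ᵥ θ) e = ξ.2.2.2 e → ((B * Cᵀ) *ᵥ w) e = 0) :
    ∀ᶠ t : ℝ in nhds 0, Feasible C B ξ sl (sg + t • u) (θ + t • w) := by
  obtain ⟨f1, f2, f3, f4⟩ := hF
  have key1 : ∀ a b c : ℝ, a ≤ c → (a = c → b = 0) → ∀ᶠ t : ℝ in nhds 0, a + t * b ≤ c := by
    intro a b c hac hb
    rcases hac.eq_or_lt with h | h
    · simp [hb h, hac]
    · have hc : Continuous fun t : ℝ => a + t * b := by fun_prop
      have := hc.tendsto 0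
      simp only [zero_mul, add_zero] at this
      exact (this.eventually_lt_const h).mono fun _ h => h.le
  have key2 : ∀ a b c : ℝ, c ≤ a → (a = c → b = 0) → ∀ᶠ t : ℝ in nhds 0, c ≤ a + t * b := by
    intro a b c hac hb
    filter_upwards [key1 (-a) (-b) (-c) (by linarith) (fun h => by
      rw [hb (by linarith), neg_zero])] with t ht
    linarith
  have g1 := Filter.eventually_all.2 fun i => key1 (sg i) (u i) (ξ.1 i) (f3 i).2 (hu1 i)
  have g2 := Filter.eventually_all.2 fun i => key2 (sg i) (u i) (ξ.2.1 i) (f3 i).1 (hu2 i)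
  have g3 := Filter.eventually_all.2 fun e => key1 _ _ _ (f4 e).2 (hw1 e)
  have g4 := Filter.eventually_all.2 fun e => key2 _ _ _ (f4 e).1 (hw2 e)
  filter_upwards [g1, g2, g3, g4] with t a1 a2 a3 a4
  refine ⟨fun h => by simp [f1 h, h0 h], ?_, fun i => ⟨a2 i, a1 i⟩, fun e => ?_⟩
  · rw [Matrix.mulVec_add, Matrix.mulVec_smul, f2, hL]
    ext i
    refine Fin.addCases (fun i => ?_) (fun i => ?_) i <;> simp
  · rw [Matrix.mulVec_add, Matrix.mulVec_smul]
    exact ⟨a4 e, a3 e⟩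

theorem binding_constraints_independent {NG NL E : ℕ} (hNG : 0 < NG) (hNL : 0 < NL) (hE : 0 < E)
    (C : Matrix (Fin (NG + NL)) (Fin E) ℝ) (B : Matrix (Fin E) (Fin E) ℝ)
    (hInc : IsIncidence C) (hConn : ConnectedIncidence C) (hB : PosDiag B) :
    ∀ f ∈ OmegaF C B, ∃ D ⊆ OmegaXi C B, OmegaXi C B ⊆ closure D ∧
      ∀ ξ ∈ D, ∀ sl ∈ TOmegaSl C B f ξ, ∀ sg θ, IsOptimal C B f ξ sl sg θ →
        LinearIndependent ℝ (fullGrad C B ξ sg θ) := by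
  classical
  intro f hf
  refine ⟨OmegaXi C B, subset_rfl, subset_closure, ?_⟩
  intro ξ hξ sl hsl sg θ hopt
  have huniq := (hf.2 ξ hξ sl hsl.1).1
  have hcount := hsl.2 sg θ hopt
  have hcard := card_bindingIdx C B ξ sg θ
  have hFt : Fintype (BindingIdx C B ξ sg θ) := Fintype.ofFinite _
  refine linearIndependent_of_top_le_span_of_card_eq_finrank ?_ ?_
  swap
  · rw [Nat.card_eq_fintype_card] at hcard
    simp only [Fintype.card_sum, Fintype.card_unit, Fintype.card_fin, hcard, hcount,
      Module.finrank_prod, Module.finrank_fin_fun]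
    omega
  by_contra hspan
  obtain ⟨φ, hφ, hle⟩ := Submodule.exists_le_ker_of_lt_top _
    (lt_top_iff_ne_top.2 fun h => hspan h.ge)
  have hv : ∀ i, φ (fullGrad C B ξ sg θ i) = 0 := fun i =>
    hle (Submodule.subset_span ⟨i, rfl⟩)
  set u : Fin NG → ℝ := fun i => φ (Pi.single i 1, 0) with hu
  set w : Fin (NG + NL) → ℝ := fun j => φ (0, Pi.single j 1) with hw
  have hφe : ∀ a b, φ (a, b) = a ⬝ᵥ u + b ⬝ᵥ w := by
    intro a b
    have h1 : φ (a, b) = (φ ∘ₗ LinearMap.inl ℝ _ _) a + (φ ∘ₗ LinearMap.inr ℝ _ _) b := by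
      simp [← map_add]
    rw [h1, LinearMap.pi_apply_eq_sum_univ (φ ∘ₗ LinearMap.inl ℝ _ _) a,
      LinearMap.pi_apply_eq_sum_univ (φ ∘ₗ LinearMap.inr ℝ _ _) b]
    have hs : ∀ {n : ℕ} (i : Fin n), (fun j => if i = j then (1 : ℝ) else 0) = Pi.single i 1 := by
      intro n i
      ext j
      simp [Pi.single_apply, eq_comm]
    simp [dotProduct, hu, hw, hs]
  have hpert := feasible_perturb C B ξ sl sg u θ w hopt.1
    (by
      intro h
      have := hv (Sum.inl (Sum.inl ()))
      simp only [fullGrad, eqGrad, hφe] at this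
      rw [zero_dotProduct, zero_add, dotProduct, Finset.sum_eq_single ⟨0, h⟩] at this
      · simpa using this
      · intro b _ hb
        have : (b : ℕ) ≠ 0 := fun h' => hb (Fin.ext h')
        simp [this]
      · simp)
    (by
      ext i
      have := hv (Sum.inl (Sum.inr i))
      simp only [fullGrad, eqGrad, hφe] at this
      have h2 : ((C * B * Cᵀ) *ᵥ w) i = (fun j => (C * B * Cᵀ) i j) ⬝ᵥ w := rfl
      rw [h2]
      revert this
      refine Fin.addCases (fun i => ?_) (fun i => ?_) i
      · intro this
        rw [dotProduct, Finset.sum_eq_single i] at this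
        · simp at this ⊢
          linarith
        · intro b _ hb
          have : (b : ℕ) ≠ i := fun h' => hb (Fin.ext h')
          simp [this]
        · simp
      · intro this
        rw [dotProduct, Finset.sum_eq_zero] at this
        · simpa using this
        · intro b _
          have : (b : ℕ) ≠ NG + i := by have := b.2; omega
          simp [this])
    (by
      intro i hi
      exact hv (Sum.inr ⟨Sum.inl i, hi⟩))
    (by
      intro i hi
      have := hv (Sum.inr ⟨Sum.inr (Sum.inl i), hi⟩)
      simpa [fullGrad, ineqGrad, hφe] using this)
    (by
      intro e he
      have := hv (Sum.inr ⟨Sum.inr (Sum.inr (Sum.inl e)), he⟩)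
      simp only [fullGrad, ineqGrad, hφe, zero_dotProduct, zero_add] at this
      exact this)
    (by
      intro e he
      have := hv (Sum.inr ⟨Sum.inr (Sum.inr (Sum.inr e)), he⟩)
      simp only [fullGrad, ineqGrad, hφe, zero_dotProduct, zero_add] at this
      have h3 : -((fun j => (B * Cᵀ) e j) ⬝ᵥ w) = 0 := by
        rw [← neg_dotProduct]
        exact this
      exact neg_eq_zero.1 h3)
  obtain ⟨ε, hε, hball⟩ := Metric.eventually_nhds_iff.1 hpert
  have hp := hball (y := ε / 2) (by rw [Real.dist_eq, sub_zero, abs_of_pos] <;> linarith)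
  have hm := hball (y := -(ε / 2)) (by
    rw [Real.dist_eq, sub_zero, abs_neg, abs_of_pos] <;> linarith)
  have i1 := hopt.2 _ _ hp
  have i2 := hopt.2 _ _ hm
  rw [dotProduct_add, dotProduct_smul, smul_eq_mul] at i1 i2
  have hfu : ε / 2 * (f ⬝ᵥ u) = 0 := by linarith
  have hopt' : IsOptimal C B f ξ sl (sg + (ε / 2) • u) (θ + (ε / 2) • w) := by
    refine ⟨hp, fun sg' θ' h' => ?_⟩
    rw [dotProduct_add, dotProduct_smul, smul_eq_mul, hfu, add_zero]
    exact hopt.2 _ _ h'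
  have heq := huniq.unique (y₁ := (sg, θ)) (y₂ := (sg + (ε / 2) • u, θ + (ε / 2) • w)) hopt hopt'
  have hne : ε / 2 ≠ 0 := by positivity
  rw [Prod.mk.injEq] at heq
  have hu0 : u = 0 := by
    have := heq.1
    rw [left_eq_add] at this
    exact (smul_eq_zero.1 this).resolve_left hne
  have hw0 : w = 0 := by
    have := heq.2
    rw [left_eq_add] at this
    exact (smul_eq_zero.1 this).resolve_left hne
  apply hφ
  refine LinearMap.ext fun ⟨a, b⟩ => ?_
  rw [hφe, hu0, hw0]
  simp

end
end

section
/- For every f ∈ Ω_f there exists a subset D ⊆ Ω_ξ, dense in Ω_ξ, such that for every ξ ∈ D and every s^l₀ ∈ ~Ω_sl(ξ, f) the following holds: there is an open set U ⊆ ℝ^{N_L} with s^l₀ ∈ U ⊆ Ω_sl(ξ) such that the set of inequality constraints that are binding at the unique optimal solution is the same for every s^l ∈ U, and the OPF map restricted to U is Fréchet differentiable at s^l₀ (i.e., there is a linear map J : ℝ^{N_L} → ℝ^{N_G} with OPF(s^l) = OPF(s^l₀) + J(s^l − s^l₀) + o(‖s^l − s^l₀‖) as s^l → s^l₀ in U).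 -/
open Matrix

noncomputable section

/-- Abstract parametric LP lemma: nondegenerate unique optimum depends affinely on the data. -/
theorem lp_local {X Y P I : Type*} [NormedAddCommGroup X] [NormedSpace ℝ X]
    [FiniteDimensional ℝ X] [NormedAddCommGroup Y] [NormedSpace ℝ Y] [FiniteDimensional ℝ Y]
    [NormedAddCommGroup P] [NormedSpace ℝ P] [FiniteDimensional ℝ P] [Fintype I]
    (A : X →ₗ[ℝ] Y) (b : P →ₗ[ℝ] Y) (g : I → X →ₗ[ℝ] ℝ) (h : I → ℝ) (φ : X →ₗ[ℝ] ℝ)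
    (p₀ : P) (x₀ : X) (hA : A x₀ = b p₀) (hg : ∀ i, g i x₀ ≤ h i)
    (hopt : ∀ y, A y = b p₀ → (∀ i, g i y ≤ h i) → φ x₀ ≤ φ y)
    (huniq : ∀ y, A y = b p₀ → (∀ i, g i y ≤ h i) →
      (∀ z, A z = b p₀ → (∀ i, g i z ≤ h i) → φ y ≤ φ z) → y = x₀)
    (hcard : Module.finrank ℝ Y + Nat.card {i // g i x₀ = h i} = Module.finrank ℝ X) :
    ∃ K : P →L[ℝ] X, ∀ᶠ p in nhds p₀,
      (A (x₀ + K (p - p₀)) = b p ∧ (∀ i, g i (x₀ + K (p - p₀)) ≤ h i) ∧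
        ∀ y, A y = b p → (∀ i, g i y ≤ h i) → φ (x₀ + K (p - p₀)) ≤ φ y) ∧
      ∀ i, g i (x₀ + K (p - p₀)) = h i ↔ g i x₀ = h i := by
  classical
  -- small steps in cone directions stay feasible
  have hstep : ∀ d : X, (∀ i, g i x₀ = h i → g i d ≤ 0) →
      ∃ t : ℝ, 0 < t ∧ ∀ i, g i (x₀ + t • d) ≤ h i := by
    intro d hd
    have hev : ∀ᶠ t in nhdsWithin (0:ℝ) (Set.Ioi 0), ∀ i, g i (x₀ + t • d) ≤ h i := by
      rw [Filter.eventually_all]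
      intro i
      by_cases hi : g i x₀ = h i
      · filter_upwards [self_mem_nhdsWithin] with t ht
        have := mul_nonpos_of_nonneg_of_nonpos (le_of_lt (show (0:ℝ) < t from ht)) (hd i hi)
        simp only [map_add, map_smul, smul_eq_mul]
        linarith
      · have hlt : g i x₀ < h i := lt_of_le_of_ne (hg i) hi
        have hc : Continuous fun t : ℝ => g i (x₀ + t • d) := by
          simp only [map_add, map_smul, smul_eq_mul]
          fun_prop
        have : ∀ᶠ t in nhds (0:ℝ), g i (x₀ + t • d) < h i := by
          apply hc.continuousAt.eventually_lt continuousAt_const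
          simpa using hlt
        exact (this.filter_mono nhdsWithin_le_nhds).mono fun t ht => le_of_lt ht
    obtain ⟨t, ht, ht'⟩ := (hev.and self_mem_nhdsWithin).exists
    exact ⟨t, ht', ht⟩
  -- cone optimality
  have hcone : ∀ d : X, A d = 0 → (∀ i, g i x₀ = h i → g i d ≤ 0) → 0 ≤ φ d := by
    intro d hAd hd
    obtain ⟨t, ht, hf⟩ := hstep d hd
    have := hopt (x₀ + t • d) (by simp [hAd, hA]) hf
    simp only [map_add, map_smul, smul_eq_mul] at this
    exact nonneg_of_mul_nonneg_right (by linarith) ht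
  -- the active system
  let L : X →ₗ[ℝ] Y × ({i // g i x₀ = h i} → ℝ) := A.prod (LinearMap.pi fun i => g i.1)
  have hinj : Function.Injective L := by
    rw [← LinearMap.ker_eq_bot, LinearMap.ker_eq_bot']
    intro d hd
    have hAd : A d = 0 := congrArg Prod.fst hd
    have hgd : ∀ i, g i x₀ = h i → g i d = 0 := fun i hi => congrFun (congrArg Prod.snd hd) ⟨i, hi⟩
    obtain ⟨t, ht, hf⟩ := hstep d fun i hi => (hgd i hi).le
    have h1 := hcone d hAd fun i hi => (hgd i hi).le
    have h2 := hcone (-d) (by simp [hAd]) fun i hi => by simp [hgd i hi]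
    have h3 : φ d = 0 := by
      rw [map_neg] at h2
      linarith
    have := huniq (x₀ + t • d) (by simp [hAd, hA]) hf fun z hz hz' => by
      simpa [h3] using hopt z hz hz'
    have h4 : t • d = 0 := by simpa using this
    exact (smul_eq_zero.1 h4).resolve_left ht.ne'
  have hdim : Module.finrank ℝ X = Module.finrank ℝ (Y × ({i // g i x₀ = h i} → ℝ)) := by
    rw [Module.finrank_prod, Module.finrank_fintype_fun_eq_card, ← hcard, Nat.card_eq_fintype_card]
  let Le := LinearEquiv.ofInjectiveOfFinrankEq L hinj hdim
  have hLe : ∀ x, Le x = L x := fun x => rfl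
  let K : P →ₗ[ℝ] X := Le.symm.toLinearMap ∘ₗ (LinearMap.inl ℝ Y _) ∘ₗ b
  have hK : ∀ p, L (K p) = (b p, 0) := fun p => by
    rw [← hLe]
    simp [K]
  have hKA : ∀ p, A (K p) = b p := fun p => congrArg Prod.fst (hK p)
  have hKg : ∀ p i, g i x₀ = h i → g i (K p) = 0 := fun p i hi =>
    congrFun (congrArg Prod.snd (hK p)) ⟨i, hi⟩
  refine ⟨LinearMap.toContinuousLinearMap K, ?_⟩
  have hev : ∀ᶠ p in nhds p₀, ∀ i, g i x₀ ≠ h i → g i (x₀ + K (p - p₀)) < h i := by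
    rw [Filter.eventually_all]
    intro i
    by_cases hi : g i x₀ = h i
    · simp [hi]
    · have hc : Continuous fun p : P => g i (x₀ + K (p - p₀)) := by
        have h1 : Continuous (g i) := LinearMap.continuous_of_finiteDimensional _
        have h2 : Continuous K := LinearMap.continuous_of_finiteDimensional _
        fun_prop
      have : ∀ᶠ p in nhds p₀, g i (x₀ + K (p - p₀)) < h i := by
        apply hc.continuousAt.eventually_lt continuousAt_const
        simpa using lt_of_le_of_ne (hg i) hi
      exact this.mono fun p hp _ => hp
  filter_upwards [hev] with p hp
  simp only [LinearMap.coe_toContinuousLinearMap']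
  have hact : ∀ i, g i x₀ = h i → g i (x₀ + K (p - p₀)) = h i := fun i hi => by
    rw [map_add, hKg _ i hi, hi, add_zero]
  have hAx : A (x₀ + K (p - p₀)) = b p := by
    rw [map_add, hKA, hA, map_sub]
    abel
  refine ⟨⟨hAx, ?_, ?_⟩, ?_⟩
  · intro i
    by_cases hi : g i x₀ = h i
    · exact (hact i hi).le
    · exact (hp i hi).le
  · intro y hy hy'
    have := hcone (y - (x₀ + K (p - p₀))) (by rw [map_sub, hy, hAx, sub_self]) fun i hi => by
      rw [map_sub, hact i hi]
      linarith [hy' i]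
    rw [map_sub] at this
    linarith
  · intro i
    refine ⟨fun hi => ?_, hact i⟩
    by_contra hne
    exact (hp i hne).ne hi

/-- The equality constraints as a linear map. -/
def eqMap {NG NL E : ℕ} (C : Matrix (Fin (NG + NL)) (Fin E) ℝ) (B : Matrix (Fin E) (Fin E) ℝ)
    (h0 : 0 < NG + NL) :
    ((Fin NG → ℝ) × (Fin (NG + NL) → ℝ)) →ₗ[ℝ] ℝ × (Fin (NG + NL) → ℝ) where
  toFun x := (x.2 ⟨0, h0⟩, (C * B * Cᵀ) *ᵥ x.2 - Fin.append x.1 0)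
  map_add' x y := by
    refine Prod.ext (by simp) (funext fun i => ?_)
    refine Fin.addCases (fun i => ?_) (fun i => ?_) i <;> simp [Matrix.mulVec_add]
    ring
  map_smul' c x := by
    refine Prod.ext (by simp) (funext fun i => ?_)
    refine Fin.addCases (fun i => ?_) (fun i => ?_) i <;> simp [Matrix.mulVec_smul]
    ring

/-- The load right-hand side as a linear map. -/
def rhsMap (NG NL : ℕ) : (Fin NL → ℝ) →ₗ[ℝ] ℝ × (Fin (NG + NL) → ℝ) where
  toFun s := (0, Fin.append 0 (-s))
  map_add' x y := by
    refine Prod.ext (by simp) (funext fun i => ?_)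
    refine Fin.addCases (fun i => ?_) (fun i => ?_) i <;> simp
    ring
  map_smul' c x := by
    refine Prod.ext (by simp) (funext fun i => ?_)
    refine Fin.addCases (fun i => ?_) (fun i => ?_) i <;> simp

/-- The inequality constraint functionals. -/
def ineqMap {NG NL E : ℕ} (C : Matrix (Fin (NG + NL)) (Fin E) ℝ) (B : Matrix (Fin E) (Fin E) ℝ) :
    (Fin NG ⊕ Fin NG ⊕ Fin E ⊕ Fin E) → ((Fin NG → ℝ) × (Fin (NG + NL) → ℝ)) →ₗ[ℝ] ℝ
  | Sum.inl i => LinearMap.proj i ∘ₗ LinearMap.fst ℝ _ _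
  | Sum.inr (Sum.inl i) => -(LinearMap.proj i ∘ₗ LinearMap.fst ℝ _ _)
  | Sum.inr (Sum.inr (Sum.inl e)) =>
      LinearMap.proj e ∘ₗ (B * Cᵀ).mulVecLin ∘ₗ LinearMap.snd ℝ _ _
  | Sum.inr (Sum.inr (Sum.inr e)) =>
      -(LinearMap.proj e ∘ₗ (B * Cᵀ).mulVecLin ∘ₗ LinearMap.snd ℝ _ _)

/-- The inequality constraint bounds. -/
def ineqBd {NG E : ℕ} (ξ : XiT NG E) : (Fin NG ⊕ Fin NG ⊕ Fin E ⊕ Fin E) → ℝ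
  | Sum.inl i => ξ.1 i
  | Sum.inr (Sum.inl i) => -ξ.2.1 i
  | Sum.inr (Sum.inr (Sum.inl e)) => ξ.2.2.1 e
  | Sum.inr (Sum.inr (Sum.inr e)) => -ξ.2.2.2 e

/-- The cost functional. -/
def costMap {NG : ℕ} (NL : ℕ) (f : Fin NG → ℝ) :
    ((Fin NG → ℝ) × (Fin (NG + NL) → ℝ)) →ₗ[ℝ] ℝ where
  toFun x := f ⬝ᵥ x.1
  map_add' x y := by simp [dotProduct_add]
  map_smul' c x := by simp [dotProduct_smul]

theorem feasible_iff_s4 {NG NL E : ℕ} (C : Matrix (Fin (NG + NL)) (Fin E) ℝ)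
    (B : Matrix (Fin E) (Fin E) ℝ) (h0 : 0 < NG + NL) (ξ : XiT NG E) (sl : Fin NL → ℝ)
    (x : (Fin NG → ℝ) × (Fin (NG + NL) → ℝ)) :
    Feasible C B ξ sl x.1 x.2 ↔
      eqMap C B h0 x = rhsMap NG NL sl ∧ ∀ c, ineqMap C B c x ≤ ineqBd ξ c := by
  have happ : (C * B * Cᵀ) *ᵥ x.2 - Fin.append x.1 0 = Fin.append 0 (-sl) ↔
      (C * B * Cᵀ) *ᵥ x.2 = Fin.append x.1 (fun j => -(sl j)) := by
    have : (Fin.append x.1 (fun j => -(sl j))) = Fin.append 0 (-sl) + Fin.append x.1 0 := by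
      funext i
      refine Fin.addCases (fun i => ?_) (fun i => ?_) i <;> simp
    rw [this, sub_eq_iff_eq_add]
  have hi : (∀ c, ineqMap C B c x ≤ ineqBd ξ c) ↔
      ((∀ i, ξ.2.1 i ≤ x.1 i ∧ x.1 i ≤ ξ.1 i) ∧
      (∀ e, ξ.2.2.2 e ≤ ((B * Cᵀ) *ᵥ x.2) e ∧ ((B * Cᵀ) *ᵥ x.2) e ≤ ξ.2.2.1 e)) := by
    simp only [Sum.forall, ineqMap, ineqBd, LinearMap.neg_apply, LinearMap.comp_apply,
      LinearMap.proj_apply, LinearMap.fst_apply, LinearMap.snd_apply, Matrix.mulVecLin_apply,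
      neg_le_neg_iff, forall_and]
    tauto
  rw [hi, ← and_assoc, Feasible, ← happ]
  simp [eqMap, rhsMap, h0, Prod.ext_iff, and_assoc]

theorem binding_iff {NG NL E : ℕ} (C : Matrix (Fin (NG + NL)) (Fin E) ℝ)
    (B : Matrix (Fin E) (Fin E) ℝ) (ξ : XiT NG E)
    (x : (Fin NG → ℝ) × (Fin (NG + NL) → ℝ)) (c) :
    c ∈ BindingIdx C B ξ x.1 x.2 ↔ ineqMap C B c x = ineqBd ξ c := by
  rcases c with i | i | e | e <;> simp [BindingIdx, ineqMap, ineqBd, -Matrix.mulVec_transpose, -Matrix.mulVec_mulVec,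
      Matrix.mulVecLin_apply, -Matrix.mulVecLin_mul]

theorem card_binding {NG NL E : ℕ} (C : Matrix (Fin (NG + NL)) (Fin E) ℝ)
    (B : Matrix (Fin E) (Fin E) ℝ) (ξ : XiT NG E)
    (x : (Fin NG → ℝ) × (Fin (NG + NL) → ℝ)) :
    Nat.card {c // ineqMap C B c x = ineqBd ξ c} = bindingCount C B ξ x.1 x.2 := by
  classical
  have hs : ∀ {n : ℕ} (p : Fin n → Prop), Set.ncard {i | p i} = ∑ i, if p i then 1 else 0 := by
    intro n p
    rw [← Finset.card_filter, Set.ncard_eq_toFinset_card']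
    congr 1
    ext
    simp
  rw [Nat.card_eq_fintype_card, Fintype.card_subtype, Finset.card_filter]
  simp only [bindingCount, hs, Fintype.sum_sum_type, ineqMap, ineqBd, LinearMap.neg_apply,
    LinearMap.comp_apply, LinearMap.proj_apply, LinearMap.fst_apply, LinearMap.snd_apply,
    Matrix.mulVecLin_apply, neg_inj, add_assoc]
  congr!

theorem opf_locally_differentiable {NG NL E : ℕ} (hNG : 0 < NG) (hNL : 0 < NL) (hE : 0 < E)
    (C : Matrix (Fin (NG + NL)) (Fin E) ℝ) (B : Matrix (Fin E) (Fin E) ℝ)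
    (hInc : IsIncidence C) (hConn : ConnectedIncidence C) (hB : PosDiag B) :
    ∀ f ∈ OmegaF C B, ∃ D ⊆ OmegaXi C B, OmegaXi C B ⊆ closure D ∧
      ∀ ξ ∈ D, ∀ sl₀ ∈ TOmegaSl C B f ξ,
        ∃ U : Set (Fin NL → ℝ), IsOpen U ∧ sl₀ ∈ U ∧ U ⊆ OmegaSl C B ξ ∧
          (∃ S : Set (Fin NG ⊕ Fin NG ⊕ Fin E ⊕ Fin E),
            ∀ sl ∈ U, ∀ sg θ, IsOptimal C B f ξ sl sg θ → BindingIdx C B ξ sg θ = S) ∧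
          ∃ J : (Fin NL → ℝ) →L[ℝ] (Fin NG → ℝ),
            HasFDerivWithinAt (OPFmap C B f ξ) J U sl₀ := by
  intro f hf
  refine ⟨OmegaXi C B, subset_rfl, subset_closure, ?_⟩
  intro ξ hξ sl₀ hsl₀
  have h0 : 0 < NG + NL := by omega
  have hopt_iff : ∀ sl (x : (Fin NG → ℝ) × (Fin (NG + NL) → ℝ)), IsOptimal C B f ξ sl x.1 x.2 ↔
      eqMap C B h0 x = rhsMap NG NL sl ∧ (∀ c, ineqMap C B c x ≤ ineqBd ξ c) ∧
      ∀ y, eqMap C B h0 y = rhsMap NG NL sl → (∀ c, ineqMap C B c y ≤ ineqBd ξ c) →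
        costMap NL f x ≤ costMap NL f y := by
    intro sl x
    rw [IsOptimal, feasible_iff_s4 C B h0, and_assoc]
    refine and_congr_right fun _ => and_congr_right fun _ => ⟨fun h y h1 h2 => ?_, fun h a b hab => ?_⟩
    · exact h y.1 y.2 ((feasible_iff_s4 C B h0 ξ sl y).2 ⟨h1, h2⟩)
    · have := (feasible_iff_s4 C B h0 ξ sl (a, b)).1 hab
      exact h (a, b) this.1 this.2
  obtain ⟨x₀, hx₀, hu₀⟩ := (hf.2 ξ hξ sl₀ hsl₀.1).1
  have hcount := hsl₀.2 _ _ hx₀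
  have hx₀' := (hopt_iff sl₀ x₀).1 hx₀
  obtain ⟨K, hK⟩ := lp_local (eqMap C B h0) (rhsMap NG NL) (ineqMap C B) (ineqBd ξ) (costMap NL f)
    sl₀ x₀ hx₀'.1 hx₀'.2.1 hx₀'.2.2
    (fun y h1 h2 h3 => hu₀ y ((hopt_iff sl₀ y).2 ⟨h1, h2, h3⟩)) (by
      rw [card_binding, hcount]
      simp
      omega)
  have hpos : ∀ᶠ sl in nhds sl₀, ∀ j, 0 < sl j := by
    rw [Filter.eventually_all]
    intro j
    exact continuousAt_const.eventually_lt (continuous_apply j).continuousAt (hsl₀.1.1 j)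
  obtain ⟨U, hU, hUo, hUm⟩ := eventually_nhds_iff.1 (hK.and hpos)
  have hUopt : ∀ sl ∈ U, IsOptimal C B f ξ sl (x₀ + K (sl - sl₀)).1 (x₀ + K (sl - sl₀)).2 :=
    fun sl hs => (hopt_iff sl _).2 (hU sl hs).1.1
  have hUsl : U ⊆ OmegaSl C B ξ := fun sl hs => ⟨(hU sl hs).2, _, _, (hUopt sl hs).1⟩
  have hUu : ∀ sl ∈ U, ∀ y : (Fin NG → ℝ) × (Fin (NG + NL) → ℝ),
      IsOptimal C B f ξ sl y.1 y.2 → y = x₀ + K (sl - sl₀) :=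
    fun sl hs y hy => (hf.2 ξ hξ sl (hUsl hs)).1.unique hy (hUopt sl hs)
  refine ⟨U, hUo, hUm, hUsl, ⟨BindingIdx C B ξ x₀.1 x₀.2, ?_⟩,
    (ContinuousLinearMap.fst ℝ _ _).comp K, ?_⟩
  · intro sl hs sg θ ho
    have hy := hUu sl hs (sg, θ) ho
    ext c
    rw [binding_iff, ← (hU sl hs).1.2 c, ← hy]
    exact binding_iff C B ξ (sg, θ) c
  · have hval : ∀ sl ∈ U, OPFmap C B f ξ sl = (x₀ + K (sl - sl₀)).1 := by
      intro sl hs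
      have hex : ∃ p : (Fin NG → ℝ) × (Fin (NG + NL) → ℝ), IsOptimal C B f ξ sl p.1 p.2 :=
        ⟨_, hUopt sl hs⟩
      rw [OPFmap, dif_pos hex, hUu sl hs _ hex.choose_spec]
    have hd : HasFDerivWithinAt (fun sl => (x₀ + K (sl - sl₀)).1)
        ((ContinuousLinearMap.fst ℝ _ _).comp K) U sl₀ := by
      have h1 : HasFDerivAt (fun sl => x₀ + K (sl - sl₀)) K sl₀ :=
        (K.hasFDerivAt.comp sl₀ ((hasFDerivAt_id sl₀).sub_const sl₀)).const_add x₀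
      exact ((ContinuousLinearMap.fst ℝ _ _).hasFDerivAt.comp sl₀ h1).hasFDerivWithinAt
    exact hd.congr hval (hval sl₀ hUm)

end
end
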